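/- arXiv:2604.14681 — 2 statements merged into one kernel-verified Lean document; each statement's English description precedes it below -/
import Mathlib

section
/- (Theorem 3.1, expansion of the pair interaction.) Let d ≥ 1 and let (ρ^{(n)})_{n≥0} be symmetric measurable functions ρ^{(n)} : (ℝ^d)^n → [0,∞) with ρ^{(0)} = 1, translation invariant, satisfying a Ruelle bound ρ^{(n)} ≤ ξ^n for some ξ > 0, with constant density ρ := ρ^{(1)} > 0. Let ρ_T ∈ A₀ be the unique configuration functional with (ρ^{(n)})_{n≥0} = exp∗ ρ_T, and define Janossy densities j_Λ^{(n)}(x₁,…,x_n) := Σ_{k=0}^∞ ((−1)^k/k!) ∫_{Λ^k} ρ^{(n+k)}(x₁,…,x_n,y) dy. Let μ ∈ ℝ and let H : (ℝ^d)² → ℝ be symmetric measurable. Assume (Assumption A): for every bounded Δ ⊆ ℝ^d, sup_{x ∈ Δ} | j_{B_R}^{(1)}(x)/j_{B_R}^{(0)} − e^{μ} | → 0 and sup_{(x₁,x₂) ∈ Δ²} | j_{B_R}^{(2)}(x₁,x₂)/j_{B_R}^{(0)} − e^{2μ − H(x₁,x₂)} | → 0 as R → ∞. Assume (Assumption B):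 there are M, A, D_ρ > 0 such that for m ∈ {1,2}, every bounded measurable Λ, every k ≥ 1 and all x₁,…,x_m ∈ ℝ^d, ∫_{Λ^k} |ρ_T^{(m+k)}(x₁,…,x_m,y)| dy ≤ (m+k−1)! M A^m D_ρ^k ρ^m. Fix r > 0 and assume (Assumption C): there is d(r) > 0 with ρ² ≤ d(r) ρ^{(2)}(x₁,x₂) whenever |x₁ − x₂| ≥ r. For x₁, x₂ with ρ^{(2)}(x₁,x₂) ≠ 0 let ω_{(x₁,x₂)} ∈ A₀ be the unique functional satisfying D_{x₁,x₂} ρ_T / ρ^{(2)}(x₁,x₂) = ( exp∗ ω_{(x₁,x₂)} − (ρ²/ρ^{(2)}(x₁,x₂)) 𝟙 ) ∗ ( D_{x₁} ρ_T / ρ ) ∗ ( D_{x₂} ρ_T / ρ ). Then there exists D₀ > 0, depending only on M, A and d(r), such that if D_ρ ≤ D₀ then for all x₁, x₂ ∈ ℝ^d with |x₁ − x₂| ≥ r the series Σ_{k≥1} ((−1)^k/k!) ∫_{(ℝ^d)^k} ω_{(x₁,x₂)}^{(k)}(y₁,…,y_k) dy converges absolutely and H(x₁,x₂) = − log( ρ^{(2)}(x₁,x₂)/ρ²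 ) − Σ_{k=1}^∞ ((−1)^k/k!) ∫_{(ℝ^d)^k} ω_{(x₁,x₂)}^{(k)}(y₁,…,y_k) dy. -/
open MeasureTheory Finset

abbrev CF (E : Type) : Type := (n : ℕ) → (Fin n → E) → ℝ

namespace CF

variable {E : Type}

/-- Symmetry of a configuration functional under permutations of the arguments. -/
def IsSymm (F : CF E) : Prop :=
  ∀ (n : ℕ) (σ : Equiv.Perm (Fin n)) (x : Fin n → E), F n (x ∘ σ) = F n x

/-- The subtuple of `x` with indices in `I`, listed in increasing order. -/
noncomputable def sub {n : ℕ} (x : Fin n → E) (I : Finset (Fin n)) : Fin I.card → E :=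
  fun i => x (I.orderIsoOfFin rfl i).1

/-- The convolution `Ψ ∗ Φ`. -/
noncomputable def conv (Ψ Φ : CF E) : CF E :=
  fun n x => ∑ I : Finset (Fin n), Ψ I.card (sub x I) * Φ Iᶜ.card (sub x Iᶜ)

/-- The unit `𝟙`. -/
def unit : CF E := fun n _ => if n = 0 then 1 else 0

/-- Star-powers `Φ^{∗m}`. -/
noncomputable def starPow (Φ : CF E) : ℕ → CF E
  | 0 => unit
  | m + 1 => conv Φ (starPow Φ m)

/-- The star-exponential `exp∗ Φ = 𝟙 + Σ_{m≥1} Φ^{∗m}/m!`; on `A₀` the sum in the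
`n`-th component is finite since `(Φ^{∗m})^{(n)} = 0` for `m > n`. -/
noncomputable def starExp (Φ : CF E) : CF E :=
  fun n x => ∑ m ∈ Finset.range (n + 1), ((m.factorial : ℝ))⁻¹ * starPow Φ m n x

/-- The derivative `D_x`. -/
noncomputable def D (x : E) (Φ : CF E) : CF E := fun n y => Φ (n + 1) (Fin.cons x y)

/-- The second derivative `D_{x₁,x₂} = D_{x₁} ∘ D_{x₂}`. -/
noncomputable def D2 (x₁ x₂ : E) (Φ : CF E) : CF E := D x₁ (D x₂ Φ)

end CF

/-- Euclidean space `ℝ^d`. -/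
abbrev Euc (d : ℕ) : Type := EuclideanSpace ℝ (Fin d)

/-- The product measure on `Λ^n ⊆ (ℝ^d)^n` (Lebesgue measure restricted to `Λ`
in each coordinate). -/
noncomputable def piRestrict (d : ℕ) (Λ : Set (Euc d)) (n : ℕ) :
    MeasureTheory.Measure (Fin n → Euc d) :=
  MeasureTheory.Measure.pi fun _ => MeasureTheory.volume.restrict Λ

/-- Lebesgue measure on `(ℝ^d)^n`. -/
noncomputable def piVol (d : ℕ) (n : ℕ) : MeasureTheory.Measure (Fin n → Euc d) :=
  MeasureTheory.Measure.pi fun _ => MeasureTheory.volume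
/-- The Janossy densities
`j_Λ^{(n)}(x) = Σ_k ((−1)^k/k!) ∫_{Λ^k} ρ^{(n+k)}(x,y) dy`. -/
noncomputable def janossy (d : ℕ) (ρ : CF (Euc d)) (Λ : Set (Euc d)) (n : ℕ)
    (x : Fin n → Euc d) : ℝ :=
  ∑' k : ℕ, (-1 : ℝ) ^ k / k.factorial *
    ∫ y, ρ (n + k) (Fin.append x y) ∂(piRestrict d Λ k)

/-!
For a measure `ν`, the functional `L F = ∑ₖ ((-1)ᵏ / k!) ∫ F⁽ᵏ⁾ dνᵏ` is multiplicative on the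
convolution algebra of configuration functionals with finite norm `∑ₖ (1 / k!) ∫ |F⁽ᵏ⁾| dνᵏ`, hence
turns `exp∗` into `exp`. As `D_x (exp∗ ρ_T) = D_x ρ_T ∗ exp∗ ρ_T`, the ratios of Janossy densities
in a volume `Λ` are `L_Λ (D_x ρ_T)` and `L_Λ (D_{x₁,x₂} ρ_T + D_{x₁} ρ_T ∗ D_{x₂} ρ_T)`, and letting
`Λ` increase shows that on the whole space `L` takes the values `e^μ` and `e^{2μ - H}`. If `D_ρ` is
small, inverting the factors `D_{x_i} ρ_T / ρ` and then `exp∗` in the equation for `ω` shows, order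
by order, that `ω` has finite norm. Applying `L` to that equation gives
`e^{2μ - H} = (ρ⁽²⁾ / ρ²) e^{L ω} e^{2μ}`, and the expansion is its logarithm.
-/

open Filter
open scoped ENNReal Topology

section FinsetSums

variable {α β M : Type*} [AddCommMonoid M]

lemma sum_powerset_map (e : α ↪ β) (s : Finset α) (f : Finset β → M) :
    ∑ t ∈ (s.map e).powerset, f t = ∑ I ∈ s.powerset, f (I.map e) := by
  refine (Finset.sum_nbij (fun I : Finset α => I.map e) (fun I hI => ?_) (fun I _ J _ h => ?_)
    (fun t ht => ?_) fun I _ => rfl).symm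
  · exact mem_powerset.2 (map_subset_map.2 (mem_powerset.1 hI))
  · exact map_injective e h
  · obtain ⟨I, hI, rfl⟩ := subset_map_iff.1 (mem_powerset.1 ht)
    exact ⟨I, mem_powerset.2 hI, rfl⟩

lemma sum_finset_fin_succ {n : ℕ} (f : Finset (Fin (n + 1)) → M) :
    ∑ I, f I = ∑ I : Finset (Fin n), f (I.map (Fin.succEmb n)) +
      ∑ I : Finset (Fin n), f (insert 0 (I.map (Fin.succEmb n))) := by
  have zero_notMem : (0 : Fin (n + 1)) ∉ univ.map (Fin.succEmb n) := by simp
  have univ_eq : (univ : Finset (Fin (n + 1))) = insert 0 (univ.map (Fin.succEmb n)) := by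
    ext a; cases a using Fin.cases <;> simp
  rw [← powerset_univ, univ_eq, sum_powerset_insert zero_notMem,
    sum_powerset_map, sum_powerset_map, powerset_univ]

lemma compl_map_succEmb {n : ℕ} (I : Finset (Fin n)) :
    (I.map (Fin.succEmb n))ᶜ = insert 0 (Iᶜ.map (Fin.succEmb n)) := by
  ext a; cases a using Fin.cases <;> simp

lemma compl_insert_zero_map_succEmb {n : ℕ} (I : Finset (Fin n)) :
    (insert 0 (I.map (Fin.succEmb n)))ᶜ = Iᶜ.map (Fin.succEmb n) := by
  ext a; cases a using Fin.cases <;> simp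

lemma sum_mul_card_compl {R : Type*} [CommSemiring R] (a b : ℕ → R) (n : ℕ) :
    ∑ I : Finset (Fin n), a #I * b #Iᶜ =
      ∑ p ∈ antidiagonal n, (n.choose p.1 : R) * (a p.1 * b p.2) := by
  simp_rw [card_compl, Fintype.card_fin]
  rw [← powerset_univ, sum_powerset_apply_card (fun k => a k * b (n - k)), card_univ,
    Fintype.card_fin, Finset.Nat.sum_antidiagonal_eq_sum_range_succ_mk]
  simp only [nsmul_eq_mul]

end FinsetSums

namespace CF

section Algebra

variable {E : Type}

/-- The value `F(x_I)` of `F` on the subtuple of `x` indexed by `I`. -/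
noncomputable def evalOn (F : CF E) {n : ℕ} (x : Fin n → E) (I : Finset (Fin n)) : ℝ :=
  F #I (sub x I)

lemma evalOn_eq (F : CF E) {n k : ℕ} (x : Fin n → E) (I : Finset (Fin n)) (h : #I = k) :
    evalOn F x I = F k (x ∘ I.orderEmbOfFin h) := by
  subst h; rfl

lemma evalOn_univ (F : CF E) {n : ℕ} (x : Fin n → E) : evalOn F x univ = F n x := by
  have emb_eq_id : id = (univ : Finset (Fin n)).orderEmbOfFin (card_fin n) :=
    orderEmbOfFin_unique _ (fun _ => mem_univ _) strictMono_id
  rw [evalOn_eq F x univ (card_fin n), ← emb_eq_id, Function.comp_id]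

lemma evalOn_comp (F : CF E) {m n : ℕ} (x : Fin n → E) (e : Fin m ↪o Fin n)
    (I : Finset (Fin m)) : evalOn F (x ∘ e) I = evalOn F x (I.map e.toEmbedding) := by
  have emb_eq : e ∘ I.orderEmbOfFin rfl = (I.map e.toEmbedding).orderEmbOfFin (card_map _) :=
    orderEmbOfFin_unique _ (fun i => by simp) (e.strictMono.comp (I.orderEmbOfFin rfl).strictMono)
  rw [evalOn_eq F _ I rfl, evalOn_eq F x _ (card_map _), ← emb_eq, Function.comp_assoc]

lemma evalOn_cons_map_succEmb (F : CF E) {n : ℕ} (x : E) (y : Fin n → E)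
    (I : Finset (Fin n)) :
    evalOn F (Fin.cons x y : Fin (n + 1) → E) (I.map (Fin.succEmb n)) = evalOn F y I :=
  (evalOn_comp F (Fin.cons x y : Fin (n + 1) → E) (Fin.succOrderEmb n) I).symm

lemma evalOn_cons_insert_zero (F : CF E) {n : ℕ} (x : E) (y : Fin n → E)
    (I : Finset (Fin n)) :
    evalOn F (Fin.cons x y : Fin (n + 1) → E) (insert 0 (I.map (Fin.succEmb n))) =
      evalOn (D x F) y I := by
  have card_eq : #(insert 0 (I.map (Fin.succEmb n))) = #I + 1 := by
    rw [card_insert_of_notMem (by simp), card_map]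
  have emb_eq : Fin.cons 0 (Fin.succ ∘ I.orderEmbOfFin rfl) =
      (insert 0 (I.map (Fin.succEmb n))).orderEmbOfFin card_eq := by
    refine orderEmbOfFin_unique _ (fun i => ?_) fun i j hij => ?_
    · cases i using Fin.cases <;> simp
    · cases i using Fin.cases <;> cases j using Fin.cases <;> simp_all
  rw [evalOn_eq F _ _ card_eq, evalOn_eq (D x F) y I rfl, D, ← emb_eq]
  congr 1
  funext i
  cases i using Fin.cases <;> simp

lemma evalOn_unit {n : ℕ} (x : Fin n → E) (I : Finset (Fin n)) :
    evalOn unit x I = if I = ∅ then 1 else 0 := by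
  simp [evalOn, unit]

lemma apply_comp_cast (F : CF E) {m n : ℕ} (h : m = n) (x : Fin n → E) :
    F m (x ∘ Fin.cast h) = F n x := by
  subst h; rfl

lemma conv_apply (F G : CF E) (n : ℕ) (x : Fin n → E) :
    conv F G n x = ∑ I : Finset (Fin n), evalOn F x I * evalOn G x Iᶜ := rfl

lemma evalOn_conv (F G : CF E) {n : ℕ} (x : Fin n → E) (J : Finset (Fin n)) :
    evalOn (conv F G) x J = ∑ I ∈ J.powerset, evalOn F x I * evalOn G x (J \ I) := by
  have map_univ : univ.map (J.orderEmbOfFin rfl).toEmbedding = J := map_orderEmbOfFin_univ J rfl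
  rw [evalOn_eq _ x J rfl, conv_apply]
  simp_rw [evalOn_comp, compl_eq_univ_sdiff, Finset.map_sdiff, map_univ]
  conv_rhs => rw [← map_univ, sum_powerset_map, powerset_univ, map_univ]

lemma conv_comm (F G : CF E) : conv F G = conv G F := by
  funext n x
  rw [conv_apply, conv_apply]
  exact Fintype.sum_equiv (compl_involutive.toPerm _) _ _ fun I => by simp [mul_comm]

lemma conv_left_comm (F G H : CF E) : conv F (conv G H) = conv G (conv F H) := by
  funext n x
  simp_rw [conv_apply, evalOn_conv, Finset.mul_sum]
  rw [Finset.sum_comm' (t' := univ) (s' := fun J => Jᶜ.powerset)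
    (by simp [Finset.subset_compl_comm])]
  refine Finset.sum_congr rfl fun J _ => Finset.sum_congr rfl fun I _ => ?_
  rw [show Iᶜ \ J = Jᶜ \ I by ext a; simp [and_comm]]
  ring

lemma conv_assoc (F G H : CF E) : conv (conv F G) H = conv F (conv G H) := by
  rw [conv_comm, conv_left_comm, conv_comm H G]

lemma conv_add (F G H : CF E) : conv F (G + H) = conv F G + conv F H := by
  funext n x
  simp only [conv, Pi.add_apply, mul_add, Finset.sum_add_distrib]

lemma conv_smul (c : ℝ) (F G : CF E) : conv F (c • G) = c • conv F G := by
  funext n x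
  simp only [conv, Pi.smul_apply, smul_eq_mul, Finset.mul_sum, mul_left_comm]

lemma add_conv (F G H : CF E) : conv (F + G) H = conv F H + conv G H := by
  rw [conv_comm, conv_add, conv_comm H, conv_comm H]

lemma smul_conv (c : ℝ) (F G : CF E) : conv (c • F) G = c • conv F G := by
  rw [conv_comm, conv_smul, conv_comm]

lemma unit_conv (F : CF E) : conv unit F = F := by
  funext n x
  simp [conv_apply, evalOn_unit, evalOn_univ]

lemma conv_unit (F : CF E) : conv F unit = F := by rw [conv_comm, unit_conv]

lemma eq_sub_conv_of_conv_eq {a : ℝ} {w u g : CF E}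
    (h : conv (w + a • unit) (unit + u) = g + a • unit) : w = g - a • u - conv w u := by
  rw [conv_add, conv_unit, add_conv, smul_conv, unit_conv] at h
  rw [eq_sub_iff_add_eq, eq_sub_iff_add_eq, ← add_left_inj (a • unit), ← h]
  abel

lemma conv_zero_apply (F G : CF E) (x : Fin 0 → E) : conv F G 0 x = F 0 x * G 0 x := by
  rw [conv_apply, univ_unique, sum_singleton, Subsingleton.elim (default : Finset (Fin 0)) univ,
    Subsingleton.elim (univ : Finset (Fin 0))ᶜ univ, evalOn_univ, evalOn_univ]

lemma D_conv (x : E) (F G : CF E) : D x (conv F G) = conv (D x F) G + conv F (D x G) := by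
  funext n y
  change conv F G (n + 1) (Fin.cons x y) = conv (D x F) G n y + conv F (D x G) n y
  simp_rw [conv_apply, sum_finset_fin_succ, compl_map_succEmb, compl_insert_zero_map_succEmb,
    evalOn_cons_insert_zero, evalOn_cons_map_succEmb]
  exact add_comm _ _

lemma D2_comm {F : CF E} (hF : IsSymm F) (x₁ x₂ : E) : D2 x₁ x₂ F = D2 x₂ x₁ F := by
  funext n y
  simp only [D2, D]
  rw [← hF (n + 2) (Equiv.swap 0 1)]
  congr 1
  funext i
  cases i using Fin.cases with
  | zero => simp
  | succ i =>
    cases i using Fin.cases with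
    | zero => simp
    | succ i =>
      rw [Function.comp_apply, Equiv.swap_apply_of_ne_of_ne (by simp) (by simp [Fin.ext_iff])]
      simp

end Algebra

section StarExp

variable {E : Type} {F F' G G' : CF E} {N : ℕ}

lemma starPow_succ (F : CF E) (m : ℕ) : starPow F (m + 1) = conv F (starPow F m) := rfl

lemma starPow_one (F : CF E) : starPow F 1 = F := conv_unit F

lemma D_starPow_succ (x : E) (F : CF E) (m : ℕ) :
    D x (starPow F (m + 1)) = (m + 1 : ℝ) • conv (D x F) (starPow F m) := by
  induction m with
  | zero => simp [starPow, conv_unit]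
  | succ m ih =>
    rw [starPow_succ, D_conv, ih, conv_smul, conv_left_comm, ← starPow_succ]
    push_cast
    module

lemma conv_congr_of_lt (hG : G 0 = 0) (h : ∀ k < N, F k = F' k) :
    ∀ k < N + 1, conv F G k = conv F' G k := by
  intro k hk
  funext x
  refine Finset.sum_congr rfl fun I _ => ?_
  have card_add : #I + #Iᶜ = k := by simp [card_add_card_compl]
  rcases Nat.eq_zero_or_pos #Iᶜ with hI | hI
  · have : G #Iᶜ = 0 := by rw [hI, hG]
    simp [this]
  · rw [h #I (by omega)]

lemma starPow_eq_zero_of_lt (hF : F 0 = 0) {m k : ℕ} (hk : k < m) : starPow F m k = 0 := by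
  induction m generalizing k with
  | zero => omega
  | succ m ih =>
    have zero_conv : conv 0 F = 0 := by simpa using smul_conv 0 F F
    rw [starPow_succ, conv_comm, conv_congr_of_lt (F' := 0) hF (fun _ h => ih h) k hk, zero_conv]
    rfl

lemma conv_congr₂_of_lt (hF' : F' 0 = 0) (hG : G 0 = 0) (hFF' : ∀ k < N, F k = F' k)
    (hGG' : ∀ k < N, G k = G' k) : ∀ k < N + 1, conv F G k = conv F' G' k := by
  intro k hk
  rw [conv_congr_of_lt hG hFF' k hk, conv_comm, conv_congr_of_lt hF' hGG' k hk, conv_comm]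

lemma starPow_succ_congr_of_lt (hF : F 0 = 0) (hF' : F' 0 = 0) (h : ∀ k < N, F k = F' k) (m : ℕ) :
    ∀ k < N, starPow F (m + 1) k = starPow F' (m + 1) k := by
  induction m with
  | zero => simpa only [zero_add, starPow_one] using h
  | succ m ih =>
    exact fun k hk => conv_congr₂_of_lt hF' (starPow_eq_zero_of_lt hF m.succ_pos) h ih k (by omega)

lemma starPow_add_two_congr_of_lt (hF : F 0 = 0) (hF' : F' 0 = 0) (h : ∀ k < N, F k = F' k)
    (m : ℕ) : ∀ k < N + 1, starPow F (m + 2) k = starPow F' (m + 2) k :=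
  conv_congr₂_of_lt hF' (starPow_eq_zero_of_lt hF m.succ_pos) h
    (starPow_succ_congr_of_lt hF hF' h m)

lemma starExp_zero (F : CF E) : starExp F 0 = unit 0 := by
  funext x; simp [starExp, starPow]

lemma starExp_eq_sum_range (hF : F 0 = 0) {n N : ℕ} (h : n < N) :
    starExp F n = ∑ m ∈ range N, (m.factorial : ℝ)⁻¹ • starPow F m n := by
  have tail_eq_zero : ∀ m ∈ range N, m ∉ range (n + 1) →
      (m.factorial : ℝ)⁻¹ • starPow F m n = 0 := fun m _ hm => by
    rw [starPow_eq_zero_of_lt hF (by simpa using hm), smul_zero]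
  rw [← Finset.sum_subset (range_mono h) tail_eq_zero]
  funext x
  simp [starExp]

/-- The part `exp∗ F − 𝟙 − F` of the star-exponential that is at least quadratic in `F`. -/
noncomputable def starExpTail (F : CF E) : CF E := starExp F - unit - F

lemma starExpTail_eq_sum_range (hF : F 0 = 0) {n N : ℕ} (h : n < N) :
    starExpTail F n =
      ∑ m ∈ range N, ((m + 2).factorial : ℝ)⁻¹ • starPow F (m + 2) n := by
  rw [starExpTail, Pi.sub_apply, Pi.sub_apply, starExp_eq_sum_range hF (N := N + 2) (by omega),
    sum_range_succ', sum_range_succ', starPow_one]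
  simp [starPow]

lemma starExpTail_congr_of_lt (hF : F 0 = 0) (hF' : F' 0 = 0)
    (h : ∀ k < N, F k = F' k) :
    ∀ k < N + 1, starExpTail F k = starExpTail F' k := by
  intro k hk
  rw [starExpTail_eq_sum_range hF hk, starExpTail_eq_sum_range hF' hk]
  exact sum_congr rfl fun m _ => by rw [starPow_add_two_congr_of_lt hF hF' h m k hk]

lemma conv_starExp_apply (hF : F 0 = 0) (G : CF E) (n : ℕ) (y : Fin n → E) :
    conv G (starExp F) n y =
      ∑ m ∈ range (n + 1), (m.factorial : ℝ)⁻¹ * conv G (starPow F m) n y := by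
  have expand (I : Finset (Fin n)) : starExp F #Iᶜ (sub y Iᶜ) =
      ∑ m ∈ range (n + 1), (m.factorial : ℝ)⁻¹ * starPow F m #Iᶜ (sub y Iᶜ) := by
    rw [starExp_eq_sum_range hF (Nat.lt_succ_of_le (card_finset_fin_le Iᶜ))]
    simp
  simp_rw [conv, expand, Finset.mul_sum]
  rw [Finset.sum_comm]
  simp_rw [mul_left_comm]

lemma D_starExp (x : E) (hF : F 0 = 0) : D x (starExp F) = conv (D x F) (starExp F) := by
  funext n y
  have term (m : ℕ) : ((m + 1).factorial : ℝ)⁻¹ * starPow F (m + 1) (n + 1) (Fin.cons x y) =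
      (m.factorial : ℝ)⁻¹ * conv (D x F) (starPow F m) n y := by
    change _ * D x (starPow F (m + 1)) n y = _
    rw [D_starPow_succ, Nat.factorial_succ]
    simp only [Pi.smul_apply, smul_eq_mul]
    push_cast
    field_simp
  rw [conv_starExp_apply hF, D, starExp, sum_range_succ']
  simp_rw [term]
  simp [starPow, unit]

lemma D2_starExp (x₁ x₂ : E) (hF : F 0 = 0) :
    D2 x₁ x₂ (starExp F) = conv (D2 x₁ x₂ F + conv (D x₁ F) (D x₂ F)) (starExp F) := by
  rw [D2, D_starExp x₂ hF, D_conv, D_starExp x₁ hF, add_conv, conv_left_comm, conv_assoc, D2]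

end StarExp

section MeasurePreservingSub

variable {E : Type} [MeasurableSpace E]

@[fun_prop]
lemma measurable_sub {n : ℕ} (I : Finset (Fin n)) :
    Measurable fun x : Fin n → E => sub x I :=
  measurable_pi_lambda _ fun _ => measurable_pi_apply _

lemma measurePreserving_sub_prod_sub_compl (ν : Measure E) [SigmaFinite ν] {n : ℕ}
    (I : Finset (Fin n)) :
    MeasurePreserving (fun x : Fin n → E => (sub x I, sub x Iᶜ))
      (Measure.pi fun _ => ν) ((Measure.pi fun _ => ν).prod (Measure.pi fun _ => ν)) :=
  (measurePreserving_sumPiEquivProdPi fun _ : Fin #I ⊕ Fin #Iᶜ => ν).comp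
    (measurePreserving_piCongrLeft (fun _ : Fin n => ν) (finSumEquivOfFinset rfl rfl)).symm

end MeasurePreservingSub

section Norm

variable {E : Type} [MeasurableSpace E] {ν : Measure E} {F G : CF E}

/-- The coefficient `(−1)^k / k!` of the `k`-point contribution in Janossy-type series. -/
noncomputable def altWeight (k : ℕ) : ℝ := (-1 : ℝ) ^ k / k.factorial

/-- The `k`-point contribution `((−1)^k / k!) ∫ F^{(k)} dν^k` to `alternatingIntegral ν F`. -/
noncomputable def altTerm (ν : Measure E) (F : CF E) (k : ℕ) : ℝ :=
  altWeight k * ∫ y, F k y ∂Measure.pi fun _ => ν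

/-- The functional `F ↦ Σ_k ((−1)^k / k!) ∫ F^{(k)} dν^k`, i.e. the Lebesgue–Poisson integral of
`F` with activity `−1`. It is meaningful for `F` with `MemL1 ν F`, where it is multiplicative for
the convolution. -/
noncomputable def alternatingIntegral (ν : Measure E) (F : CF E) : ℝ := ∑' k, altTerm ν F k

/-- The `k`-point contribution `(1 / k!) ∫ |F^{(k)}| dν^k` to `l1Norm ν F`. -/
noncomputable def l1Term (ν : Measure E) (F : CF E) (k : ℕ) : ℝ≥0∞ :=
  ‖altWeight k‖ₑ * ∫⁻ y, ‖F k y‖ₑ ∂Measure.pi fun _ => ν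

/-- The norm `Σ_k (1 / k!) ∫ |F^{(k)}| dν^k`, submultiplicative for the convolution. -/
noncomputable def l1Norm (ν : Measure E) (F : CF E) : ℝ≥0∞ := ∑' k, l1Term ν F k

/-- The convolution algebra of measurable configuration functionals of finite `l1Norm`. -/
structure MemL1 (ν : Measure E) (F : CF E) : Prop where
  measurable : ∀ n, Measurable (F n)
  l1Norm_ne_top : l1Norm ν F ≠ ∞

lemma altWeight_ne_zero (k : ℕ) : altWeight k ≠ 0 := by
  simp [altWeight, Nat.factorial_ne_zero]

lemma enorm_altWeight (k : ℕ) : ‖altWeight k‖ₑ = ENNReal.ofReal (k.factorial : ℝ)⁻¹ := by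
  rw [← ofReal_norm, altWeight, norm_div, norm_pow]
  simp

lemma choose_mul_altWeight (i j : ℕ) :
    ((i + j).choose i : ℝ) * altWeight (i + j) = altWeight i * altWeight j := by
  have factorials : ((i + j).choose i : ℝ) * i.factorial * j.factorial = (i + j).factorial := by
    rw [Nat.choose_symm_add]
    exact_mod_cast Nat.add_choose_mul_factorial_mul_factorial i j
  simp only [altWeight, pow_add, ← factorials]
  have := Nat.choose_pos (Nat.le_add_right i j)
  field_simp

lemma l1Term_add_le (hF : ∀ n, Measurable (F n)) (k : ℕ) :
    l1Term ν (F + G) k ≤ l1Term ν F k + l1Term ν G k := by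
  rw [l1Term, l1Term, l1Term, ← mul_add, ← lintegral_add_left (hF k).enorm]
  gcongr
  exact enorm_add_le _ _

lemma l1Norm_add_le (hF : ∀ n, Measurable (F n)) : l1Norm ν (F + G) ≤ l1Norm ν F + l1Norm ν G :=
  (ENNReal.tsum_le_tsum (l1Term_add_le hF)).trans_eq ENNReal.tsum_add

lemma l1Norm_smul (c : ℝ) (F : CF E) : l1Norm ν (c • F) = ‖c‖ₑ * l1Norm ν F := by
  simp_rw [l1Norm, l1Term, Pi.smul_apply, enorm_smul, lintegral_const_mul' _ _ enorm_ne_top,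
    mul_left_comm _ ‖c‖ₑ, ENNReal.tsum_mul_left]

lemma l1Norm_neg (F : CF E) : l1Norm ν (-F) = l1Norm ν F := by
  simp [l1Norm, l1Term]

lemma l1Norm_sub_le (hF : ∀ n, Measurable (F n)) : l1Norm ν (F - G) ≤ l1Norm ν F + l1Norm ν G := by
  simpa only [sub_eq_add_neg, l1Norm_neg] using l1Norm_add_le (G := -G) hF

lemma measurable_unit (n : ℕ) : Measurable ((unit : CF E) n) := measurable_const

lemma altTerm_unit (ν : Measure E) (k : ℕ) : altTerm ν unit k = if k = 0 then 1 else 0 := by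
  rcases k with _ | k <;> simp [altTerm, altWeight, unit, measureReal_def]

lemma alternatingIntegral_unit (ν : Measure E) : alternatingIntegral ν unit = 1 := by
  simp_rw [alternatingIntegral, altTerm_unit, tsum_ite_eq]

lemma l1Norm_unit (ν : Measure E) : l1Norm ν unit = 1 := by
  have l1Term_unit (k : ℕ) : l1Term ν unit k = if k = 0 then 1 else 0 := by
    rcases k with _ | k <;> simp [l1Term, altWeight, unit]
  simp_rw [l1Norm, l1Term_unit, tsum_ite_eq]

namespace MemL1

lemma unit : MemL1 ν unit := ⟨measurable_unit, by simp [l1Norm_unit]⟩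

lemma add (hF : MemL1 ν F) (hG : MemL1 ν G) : MemL1 ν (F + G) :=
  ⟨fun n => (hF.measurable n).add (hG.measurable n),
    ne_top_of_le_ne_top (ENNReal.add_ne_top.2 ⟨hF.l1Norm_ne_top, hG.l1Norm_ne_top⟩)
      (l1Norm_add_le hF.measurable)⟩

lemma smul (c : ℝ) (hF : MemL1 ν F) : MemL1 ν (c • F) :=
  ⟨fun n => (hF.measurable n).const_smul c,
    by rw [l1Norm_smul]; exact ENNReal.mul_ne_top enorm_ne_top hF.l1Norm_ne_top⟩

lemma integrable (hF : MemL1 ν F) (k : ℕ) : Integrable (F k) (Measure.pi fun _ => ν) := by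
  have term_ne_top : l1Term ν F k ≠ ∞ := ENNReal.ne_top_of_tsum_ne_top hF.l1Norm_ne_top k
  refine ⟨(hF.measurable k).aestronglyMeasurable, lt_top_iff_ne_top.2 fun lintegral_eq_top => ?_⟩
  exact term_ne_top <| by
    rw [l1Term, lintegral_eq_top, ENNReal.mul_top (enorm_ne_zero.2 (altWeight_ne_zero k))]

end MemL1

lemma enorm_altTerm_le (ν : Measure E) (F : CF E) (k : ℕ) : ‖altTerm ν F k‖ₑ ≤ l1Term ν F k := by
  rw [altTerm, enorm_mul, l1Term]
  gcongr
  exact enorm_integral_le_lintegral_enorm _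

lemma MemL1.summable_norm_altTerm (hF : MemL1 ν F) : Summable fun k => ‖altTerm ν F k‖ :=
  tsum_enorm_ne_top_iff_summable_norm.1 <|
    ne_top_of_le_ne_top hF.l1Norm_ne_top (ENNReal.tsum_le_tsum (enorm_altTerm_le ν F))

lemma alternatingIntegral_add (hF : MemL1 ν F) (hG : MemL1 ν G) :
    alternatingIntegral ν (F + G) = alternatingIntegral ν F + alternatingIntegral ν G := by
  have altTerm_add (k : ℕ) : altTerm ν (F + G) k = altTerm ν F k + altTerm ν G k := by
    rw [altTerm, altTerm, altTerm, ← mul_add, ← integral_add (hF.integrable k) (hG.integrable k)]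
    rfl
  simp_rw [alternatingIntegral, altTerm_add]
  exact hF.summable_norm_altTerm.of_norm.tsum_add hG.summable_norm_altTerm.of_norm

lemma alternatingIntegral_smul (c : ℝ) (F : CF E) :
    alternatingIntegral ν (c • F) = c * alternatingIntegral ν F := by
  simp_rw [alternatingIntegral, altTerm, Pi.smul_apply, smul_eq_mul, integral_const_mul,
    mul_left_comm _ c, tsum_mul_left]

end Norm

section NormConv

variable {E : Type} [MeasurableSpace E] {ν : Measure E} [SigmaFinite ν] {F G : CF E}

lemma measurable_conv (hF : ∀ n, Measurable (F n)) (hG : ∀ n, Measurable (G n)) (n : ℕ) :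
    Measurable (conv F G n) :=
  Finset.measurable_sum _ fun I _ => ((hF _).comp (measurable_sub I)).mul
    ((hG _).comp (measurable_sub Iᶜ))

lemma lintegral_enorm_conv_le (hF : ∀ n, Measurable (F n)) (hG : ∀ n, Measurable (G n)) (n : ℕ) :
    ∫⁻ x, ‖conv F G n x‖ₑ ∂Measure.pi (fun _ => ν) ≤
      ∑ I : Finset (Fin n), (∫⁻ y, ‖F #I y‖ₑ ∂Measure.pi fun _ => ν) *
        ∫⁻ z, ‖G #Iᶜ z‖ₑ ∂Measure.pi fun _ => ν := by
  calc ∫⁻ x, ‖conv F G n x‖ₑ ∂Measure.pi (fun _ => ν)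
      ≤ ∫⁻ x, ∑ I : Finset (Fin n), ‖F #I (sub x I)‖ₑ * ‖G #Iᶜ (sub x Iᶜ)‖ₑ
          ∂Measure.pi fun _ => ν := by
        gcongr with x
        simp_rw [← enorm_mul]
        exact enorm_sum_le _ _
    _ = ∑ I : Finset (Fin n), ∫⁻ x, ‖F #I (sub x I)‖ₑ * ‖G #Iᶜ (sub x Iᶜ)‖ₑ
          ∂Measure.pi fun _ => ν := by
        exact lintegral_finsetSum _ fun I _ => by fun_prop
    _ = _ := by
        refine sum_congr rfl fun I _ => ?_
        rw [← lintegral_prod_mul (hF _).enorm.aemeasurable (hG _).enorm.aemeasurable]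
        exact (measurePreserving_sub_prod_sub_compl ν I).lintegral_comp
          (f := fun z => ‖F #I z.1‖ₑ * ‖G #Iᶜ z.2‖ₑ) (by fun_prop)

lemma integral_conv (hF : MemL1 ν F) (hG : MemL1 ν G) (n : ℕ) :
    ∫ x, conv F G n x ∂Measure.pi (fun _ => ν) =
      ∑ I : Finset (Fin n), (∫ y, F #I y ∂Measure.pi fun _ => ν) *
        ∫ z, G #Iᶜ z ∂Measure.pi fun _ => ν := by
  have splits (I : Finset (Fin n)) := measurePreserving_sub_prod_sub_compl ν I
  have integrable_prod (I : Finset (Fin n)) := (hF.integrable #I).mul_prod (hG.integrable #Iᶜ)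
  refine (integral_finsetSum _ fun I _ =>
    (splits I).integrable_comp_of_integrable (integrable_prod I)).trans ?_
  refine sum_congr rfl fun I _ => ?_
  rw [← integral_prod_mul, ← (splits I).map_eq, integral_map (splits I).measurable.aemeasurable]
  · rfl
  · rw [(splits I).map_eq]
    exact (integrable_prod I).aestronglyMeasurable

lemma l1Term_conv_le (hF : ∀ n, Measurable (F n)) (hG : ∀ n, Measurable (G n)) (n : ℕ) :
    l1Term ν (conv F G) n ≤ ∑ p ∈ antidiagonal n, l1Term ν F p.1 * l1Term ν G p.2 := by
  refine (mul_le_mul_right (lintegral_enorm_conv_le hF hG n) _).trans_eq ?_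
  rw [sum_mul_card_compl (fun k => ∫⁻ y, ‖F k y‖ₑ ∂Measure.pi fun _ => ν)
    fun k => ∫⁻ y, ‖G k y‖ₑ ∂Measure.pi fun _ => ν, Finset.mul_sum]
  refine sum_congr rfl fun p hp => ?_
  obtain rfl := mem_antidiagonal.1 hp
  have weights : (‖altWeight (p.1 + p.2)‖ₑ * (p.1 + p.2).choose p.1 : ℝ≥0∞) =
      ‖altWeight p.1‖ₑ * ‖altWeight p.2‖ₑ := by
    rw [← enorm_mul, ← choose_mul_altWeight, enorm_mul, Real.enorm_natCast, mul_comm]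
  rw [← mul_assoc, weights, l1Term, l1Term, mul_mul_mul_comm]

lemma altTerm_conv (hF : MemL1 ν F) (hG : MemL1 ν G) (n : ℕ) :
    altTerm ν (conv F G) n = ∑ p ∈ antidiagonal n, altTerm ν F p.1 * altTerm ν G p.2 := by
  rw [altTerm, integral_conv hF hG, sum_mul_card_compl (fun k => ∫ y, F k y ∂Measure.pi fun _ => ν)
    fun k => ∫ y, G k y ∂Measure.pi fun _ => ν, Finset.mul_sum]
  refine sum_congr rfl fun p hp => ?_
  obtain rfl := mem_antidiagonal.1 hp
  rw [← mul_assoc, mul_comm (altWeight _), choose_mul_altWeight, altTerm, altTerm,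
    mul_mul_mul_comm]

lemma l1Norm_conv_le (hF : ∀ n, Measurable (F n)) (hG : ∀ n, Measurable (G n)) :
    l1Norm ν (conv F G) ≤ l1Norm ν F * l1Norm ν G := by
  calc l1Norm ν (conv F G)
      ≤ ∑' n, ∑ p ∈ antidiagonal n, l1Term ν F p.1 * l1Term ν G p.2 :=
        ENNReal.tsum_le_tsum (l1Term_conv_le hF hG)
    _ = ∑' p : ℕ × ℕ, l1Term ν F p.1 * l1Term ν G p.2 := by
        rw [← (HasAntidiagonal.sigmaAntidiagonalEquivProd (A := ℕ)).tsum_eq, ENNReal.tsum_sigma']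
        exact tsum_congr fun n =>
          (Finset.tsum_subtype (antidiagonal n) fun p => l1Term ν F p.1 * l1Term ν G p.2).symm
    _ = l1Norm ν F * l1Norm ν G := by
        rw [ENNReal.tsum_prod (f := fun i j => l1Term ν F i * l1Term ν G j)]
        simp_rw [ENNReal.tsum_mul_left, ENNReal.tsum_mul_right, l1Norm]

lemma MemL1.conv (hF : MemL1 ν F) (hG : MemL1 ν G) : MemL1 ν (conv F G) :=
  ⟨measurable_conv hF.measurable hG.measurable,
    ne_top_of_le_ne_top (ENNReal.mul_ne_top hF.l1Norm_ne_top hG.l1Norm_ne_top)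
      (l1Norm_conv_le hF.measurable hG.measurable)⟩

lemma alternatingIntegral_conv (hF : MemL1 ν F) (hG : MemL1 ν G) :
    alternatingIntegral ν (conv F G) = alternatingIntegral ν F * alternatingIntegral ν G := by
  simp_rw [alternatingIntegral, altTerm_conv hF hG]
  exact (tsum_mul_tsum_eq_tsum_sum_antidiagonal_of_summable_norm hF.summable_norm_altTerm
    hG.summable_norm_altTerm).symm

lemma measurable_starPow (hF : ∀ n, Measurable (F n)) (m n : ℕ) : Measurable (starPow F m n) := by
  induction m generalizing n with
  | zero => exact measurable_unit n
  | succ m ih => exact measurable_conv hF ih n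

lemma l1Norm_starPow_le (hF : ∀ n, Measurable (F n)) (m : ℕ) :
    l1Norm ν (starPow F m) ≤ l1Norm ν F ^ m := by
  induction m with
  | zero => simp [starPow, l1Norm_unit]
  | succ m ih =>
    rw [pow_succ']
    exact (l1Norm_conv_le hF (measurable_starPow hF m)).trans (by gcongr)

lemma MemL1.starPow (hF : MemL1 ν F) (m : ℕ) : MemL1 ν (starPow F m) :=
  ⟨measurable_starPow hF.measurable m,
    ne_top_of_le_ne_top (ENNReal.pow_ne_top hF.l1Norm_ne_top) (l1Norm_starPow_le hF.measurable m)⟩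

lemma alternatingIntegral_starPow (hF : MemL1 ν F) (m : ℕ) :
    alternatingIntegral ν (starPow F m) = alternatingIntegral ν F ^ m := by
  induction m with
  | zero => simp [starPow, alternatingIntegral_unit]
  | succ m ih => rw [starPow_succ, alternatingIntegral_conv hF (hF.starPow m), ih, pow_succ']

lemma altTerm_starExp (hF : MemL1 ν F) (hF₀ : F 0 = 0) (k : ℕ) :
    altTerm ν (starExp F) k = ∑' m, (m.factorial : ℝ)⁻¹ * altTerm ν (starPow F m) k := by
  have tail_eq_zero : ∀ m ∉ range (k + 1),
      (m.factorial : ℝ)⁻¹ * altTerm ν (CF.starPow F m) k = 0 := fun m hm => by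
    simp [altTerm, starPow_eq_zero_of_lt hF₀ (show k < m by simpa using hm)]
  rw [tsum_eq_sum tail_eq_zero, altTerm]
  unfold starExp
  rw [integral_finsetSum _ fun m _ => ((hF.starPow m).integrable k).const_mul _]
  simp_rw [altTerm, integral_const_mul, mul_left_comm _ (altWeight k), Finset.mul_sum]

lemma summable_altTerm_starPow (hF : MemL1 ν F) :
    Summable fun p : ℕ × ℕ => (p.1.factorial : ℝ)⁻¹ * altTerm ν (starPow F p.1) p.2 := by
  have row_le (m : ℕ) : ∑' k, ‖(m.factorial : ℝ)⁻¹ * altTerm ν (CF.starPow F m) k‖ₑ ≤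
      ENNReal.ofReal ((l1Norm ν F).toReal ^ m / m.factorial) := by
    simp_rw [enorm_mul, ENNReal.tsum_mul_left]
    calc _ ≤ ‖(m.factorial : ℝ)⁻¹‖ₑ * l1Norm ν F ^ m := by
          gcongr
          exact (ENNReal.tsum_le_tsum (enorm_altTerm_le ν _)).trans
            (l1Norm_starPow_le hF.measurable m)
      _ = _ := by
          rw [div_eq_inv_mul, ENNReal.ofReal_mul (by positivity),
            ENNReal.ofReal_pow ENNReal.toReal_nonneg, ENNReal.ofReal_toReal hF.l1Norm_ne_top,
            Real.enorm_eq_ofReal (by positivity)]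
  refine (tsum_enorm_ne_top_iff_summable_norm.1 ?_).of_norm
  rw [ENNReal.tsum_prod
    (f := fun m k => ‖(m.factorial : ℝ)⁻¹ * altTerm ν (CF.starPow F m) k‖ₑ)]
  refine ne_top_of_le_ne_top ?_ (ENNReal.tsum_le_tsum row_le)
  exact (Real.summable_pow_div_factorial _).tsum_ofReal_ne_top

lemma alternatingIntegral_starExp (hF : MemL1 ν F) (hF₀ : F 0 = 0) :
    alternatingIntegral ν (starExp F) = Real.exp (alternatingIntegral ν F) := by
  calc alternatingIntegral ν (starExp F)
      = ∑' k, ∑' m, (m.factorial : ℝ)⁻¹ * altTerm ν (starPow F m) k :=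
        tsum_congr (altTerm_starExp hF hF₀)
    _ = ∑' m, ∑' k, (m.factorial : ℝ)⁻¹ * altTerm ν (starPow F m) k :=
        (summable_altTerm_starPow hF).tsum_comm
    _ = ∑' m, alternatingIntegral ν F ^ m / m.factorial := by
        simp_rw [tsum_mul_left, div_eq_inv_mul, ← alternatingIntegral_starPow hF]
        rfl
    _ = Real.exp (alternatingIntegral ν F) := by
        rw [Real.exp_eq_exp_ℝ, NormedSpace.exp_eq_tsum_div]

end NormConv

section Trunc

variable {E : Type} {F G : CF E}

/-- The truncation of `F` to its components of order less than `N`. -/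
noncomputable def trunc (N : ℕ) (F : CF E) : CF E := fun k x => if k < N then F k x else 0

lemma trunc_apply_of_lt {N k : ℕ} (F : CF E) (h : k < N) : trunc N F k = F k := by
  funext x; simp [trunc, h]

lemma trunc_apply_zero_eq_zero (hF : F 0 = 0) (N : ℕ) : trunc N F 0 = 0 := by
  funext x; simp [trunc, hF]

lemma trunc_congr {N : ℕ} (h : ∀ k < N, F k = G k) : trunc N F = trunc N G := by
  funext k x
  by_cases hk : k < N <;> simp [trunc, hk, h k]

end Trunc

section Bootstrap

variable {E : Type} [MeasurableSpace E] {ν : Measure E} {F : CF E} {b : ℝ≥0∞}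

lemma measurable_trunc (hF : ∀ n, Measurable (F n)) (N n : ℕ) : Measurable (trunc N F n) := by
  unfold trunc
  split_ifs
  exacts [hF n, measurable_const]

lemma l1Norm_trunc_le (ν : Measure E) (F : CF E) (N : ℕ) : l1Norm ν (trunc N F) ≤ l1Norm ν F := by
  refine ENNReal.tsum_le_tsum fun k => ?_
  by_cases h : k < N <;> simp [l1Term, trunc, h]

lemma measurable_and_l1Norm_le_of_trunc
    (h : ∀ N, (∀ n, Measurable (trunc N F n)) ∧ l1Norm ν (trunc N F) ≤ b) :
    (∀ n, Measurable (F n)) ∧ l1Norm ν F ≤ b := by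
  refine ⟨fun n => ?_, ENNReal.tsum_le_of_sum_range_le fun N => ?_⟩
  · rw [← trunc_apply_of_lt F n.lt_succ_self]
    exact (h (n + 1)).1 n
  · calc ∑ k ∈ range N, l1Term ν F k
        = ∑ k ∈ range N, l1Term ν (trunc N F) k := sum_congr rfl fun k hk => by
          rw [l1Term, l1Term, trunc_apply_of_lt F (mem_range.1 hk)]
      _ ≤ l1Norm ν (trunc N F) := ENNReal.sum_le_tsum _
      _ ≤ b := (h N).2

/-- Induction on the order turns the a priori bound `b` into an actual one, in place of a
fixed-point argument on a complete space. -/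
lemma measurable_and_l1Norm_le_of_forall_trunc
    (h : ∀ N, (∀ n, Measurable (trunc N F n)) → l1Norm ν (trunc N F) ≤ b →
      ∃ G : CF E, (∀ n, Measurable (G n)) ∧ l1Norm ν G ≤ b ∧ ∀ k < N + 1, F k = G k) :
    (∀ n, Measurable (F n)) ∧ l1Norm ν F ≤ b := by
  refine measurable_and_l1Norm_le_of_trunc fun N => ?_
  induction N with
  | zero =>
    have trunc_zero : trunc 0 F = 0 := by funext k x; simp [trunc]
    simp [trunc_zero, l1Norm, l1Term, measurable_zero]
  | succ N ih =>
    obtain ⟨G, hG, norm_le, eq_on⟩ := h N ih.1 ih.2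
    rw [trunc_congr eq_on]
    exact ⟨measurable_trunc hG _, (l1Norm_trunc_le ν G _).trans norm_le⟩

lemma measurable_starExpTail (hF : ∀ n, Measurable (F n)) (hF₀ : F 0 = 0) (n : ℕ) :
    Measurable (starExpTail F n) := by
  rw [starExpTail_eq_sum_range hF₀ n.lt_succ_self, Finset.sum_fn]
  exact Finset.measurable_sum _ fun m _ =>
    Measurable.const_smul (measurable_starPow hF (m + 2) n) ((m + 2).factorial : ℝ)⁻¹

lemma l1Term_starExpTail_le (hF : ∀ n, Measurable (F n)) (hF₀ : F 0 = 0) (k : ℕ) :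
    l1Term ν (starExpTail F) k ≤ ∑' m, l1Term ν (starPow F (m + 2)) k := by
  have enorm_le (m : ℕ) (y : Fin k → E) :
      ‖((m + 2).factorial : ℝ)⁻¹ • starPow F (m + 2) k y‖ₑ ≤ ‖starPow F (m + 2) k y‖ₑ := by
    rw [enorm_smul]
    refine mul_le_of_le_one_left' ?_
    rw [Real.enorm_eq_ofReal (by positivity), ENNReal.ofReal_le_one]
    exact inv_le_one_of_one_le₀ (mod_cast Nat.factorial_pos _)
  calc l1Term ν (starExpTail F) k
      ≤ ‖altWeight k‖ₑ * ∫⁻ y, ∑ m ∈ range (k + 1), ‖starPow F (m + 2) k y‖ₑ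
          ∂Measure.pi fun _ => ν := by
        rw [l1Term, starExpTail_eq_sum_range hF₀ k.lt_succ_self]
        gcongr with y
        rw [Finset.sum_apply]
        exact (enorm_sum_le _ _).trans (sum_le_sum fun m _ => enorm_le m y)
    _ = ∑ m ∈ range (k + 1), l1Term ν (starPow F (m + 2)) k := by
        rw [lintegral_finsetSum _ fun m _ => (measurable_starPow hF (m + 2) k).enorm,
          Finset.mul_sum]
        rfl
    _ ≤ ∑' m, l1Term ν (starPow F (m + 2)) k := ENNReal.sum_le_tsum _

variable [SigmaFinite ν]

/-- Since `u 0 = 0`, the order `k` component of `conv w u` only involves lower components of `w`. -/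
lemma measurable_and_l1Norm_le_of_conv_eq {a : ℝ} {w u g : CF E}
    (hu : ∀ n, Measurable (u n)) (hg : ∀ n, Measurable (g n)) (hu₀ : u 0 = 0)
    (h : conv (w + a • unit) (unit + u) = g + a • unit)
    (hb : l1Norm ν g + ‖a‖ₑ * l1Norm ν u + b * l1Norm ν u ≤ b) :
    (∀ n, Measurable (w n)) ∧ l1Norm ν w ≤ b := by
  refine measurable_and_l1Norm_le_of_forall_trunc fun N hmeas hnorm =>
    ⟨g - a • u - conv (trunc N w) u, fun n => ?_, ?_, fun k hk => ?_⟩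
  · exact ((hg n).sub ((hu n).const_smul a)).sub (measurable_conv hmeas hu n)
  · calc l1Norm ν (g - a • u - conv (trunc N w) u)
        ≤ l1Norm ν g + l1Norm ν (a • u) + l1Norm ν (trunc N w) * l1Norm ν u :=
          (l1Norm_sub_le fun n => (hg n).sub ((hu n).const_smul a)).trans
            (add_le_add (l1Norm_sub_le hg) (l1Norm_conv_le hmeas hu))
      _ ≤ l1Norm ν g + ‖a‖ₑ * l1Norm ν u + b * l1Norm ν u := by
          rw [l1Norm_smul]
          gcongr
      _ ≤ b := hb
  · have conv_eq := conv_congr_of_lt hu₀ (fun k hk => trunc_apply_of_lt w hk) k hk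
    conv_lhs => rw [eq_sub_conv_of_conv_eq h]
    rw [Pi.sub_apply, Pi.sub_apply _ (conv _ _), conv_eq]

lemma l1Norm_starExpTail_le (hF : ∀ n, Measurable (F n)) (hF₀ : F 0 = 0) :
    l1Norm ν (starExpTail F) ≤ l1Norm ν F ^ 2 * (1 - l1Norm ν F)⁻¹ := by
  calc l1Norm ν (starExpTail F)
      ≤ ∑' k, ∑' m, l1Term ν (starPow F (m + 2)) k :=
        ENNReal.tsum_le_tsum (l1Term_starExpTail_le hF hF₀)
    _ = ∑' m, l1Norm ν (starPow F (m + 2)) := ENNReal.tsum_comm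
    _ ≤ ∑' m, l1Norm ν F ^ 2 * l1Norm ν F ^ m :=
        ENNReal.tsum_le_tsum fun m => by
          rw [← pow_add, add_comm 2]
          exact l1Norm_starPow_le hF (m + 2)
    _ = l1Norm ν F ^ 2 * (1 - l1Norm ν F)⁻¹ := by
        rw [ENNReal.tsum_mul_left, ENNReal.tsum_geometric]

lemma measurable_and_l1Norm_le_of_starExp_eq {w : CF E} (hF₀ : F 0 = 0)
    (hw : ∀ n, Measurable (w n)) (h : starExp F = unit + w)
    (hb : l1Norm ν w + b ^ 2 * (1 - b)⁻¹ ≤ b) :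
    (∀ n, Measurable (F n)) ∧ l1Norm ν F ≤ b := by
  refine measurable_and_l1Norm_le_of_forall_trunc fun N hmeas hnorm =>
    ⟨w - starExpTail (trunc N F), fun n => ?_, ?_, fun k hk => ?_⟩
  · exact (hw n).sub (measurable_starExpTail hmeas (trunc_apply_zero_eq_zero hF₀ N) n)
  · calc l1Norm ν (w - starExpTail (trunc N F))
        ≤ l1Norm ν w + l1Norm ν (trunc N F) ^ 2 * (1 - l1Norm ν (trunc N F))⁻¹ :=
          (l1Norm_sub_le hw).trans
            (by gcongr; exact l1Norm_starExpTail_le hmeas (trunc_apply_zero_eq_zero hF₀ N))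
      _ ≤ l1Norm ν w + b ^ 2 * (1 - b)⁻¹ := by gcongr
      _ ≤ b := hb
  · have tail_eq := starExpTail_congr_of_lt hF₀ (trunc_apply_zero_eq_zero hF₀ N)
      (fun k hk => (trunc_apply_of_lt F hk).symm) k hk
    have self_eq : F = w - starExpTail F := by rw [starExpTail, h]; abel
    conv_lhs => rw [self_eq]
    rw [Pi.sub_apply, Pi.sub_apply, tail_eq]

end Bootstrap

end CF

section Exhaustion

variable {E ι : Type*} [MeasurableSpace E] {ν : Measure E} [SigmaFinite ν] {l : Filter ι}
  {Λ : ι → Set E} {κ : Type*} [Fintype κ]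

lemma lintegral_pi_restrict_le (s : Set E) (f : (κ → E) → ℝ≥0∞) :
    ∫⁻ y, f y ∂Measure.pi (fun _ => ν.restrict s) ≤ ∫⁻ y, f y ∂Measure.pi fun _ => ν := by
  rw [← Measure.restrict_pi_pi]
  exact setLIntegral_le_lintegral _ _

lemma aecover_univ_pi (hΛ : AECover ν l Λ) :
    AECover (Measure.pi fun _ : κ => ν) l fun i => Set.univ.pi fun _ => Λ i where
  ae_eventually_mem := by
    have coordinates : ∀ᵐ y ∂Measure.pi fun _ : κ => ν, ∀ j, ∀ᶠ i in l, y j ∈ Λ i :=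
      ae_all_iff.2 fun j =>
        (Measure.tendsto_eval_ae_ae (μ := fun _ : κ => ν) (i := j)).eventually hΛ.ae_eventually_mem
    filter_upwards [coordinates] with y hy
    simpa only [Set.mem_univ_pi] using eventually_all.2 hy
  measurableSet i := MeasurableSet.univ_pi fun _ => hΛ.measurableSet i

variable [l.IsCountablyGenerated]

lemma lintegral_pi_le_of_forall_restrict_le [l.NeBot] (hΛ : AECover ν l Λ)
    {f : (κ → E) → ℝ≥0∞} (hf : AEMeasurable f (Measure.pi fun _ => ν)) {c : ℝ≥0∞}
    (h : ∀ i, ∫⁻ y, f y ∂Measure.pi (fun _ => ν.restrict (Λ i)) ≤ c) :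
    ∫⁻ y, f y ∂Measure.pi (fun _ => ν) ≤ c := by
  simp_rw [← Measure.restrict_pi_pi] at h
  exact le_of_tendsto' ((aecover_univ_pi hΛ).lintegral_tendsto_of_countably_generated hf) h

end Exhaustion

namespace CF

section FiniteVolume

variable {E : Type} [MeasurableSpace E] {ν : Measure E} {F : CF E}

lemma memL1_of_norm_le_pow [IsFiniteMeasure ν] {ξ : ℝ} (hF : ∀ n, Measurable (F n))
    (hξ : ∀ n x, ‖F n x‖ ≤ ξ ^ n) : MemL1 ν F := by
  refine ⟨hF, ne_top_of_le_ne_top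
    (Real.summable_pow_div_factorial (ξ * ν.real Set.univ)).tsum_ofReal_ne_top
    (ENNReal.tsum_le_tsum fun k => ?_)⟩
  have lintegral_le : ∫⁻ y, ‖F k y‖ₑ ∂Measure.pi (fun _ => ν) ≤
      ENNReal.ofReal ((ξ * ν.real Set.univ) ^ k) := by
    calc ∫⁻ y, ‖F k y‖ₑ ∂Measure.pi (fun _ => ν)
        ≤ ∫⁻ _, ENNReal.ofReal (ξ ^ k) ∂Measure.pi fun _ : Fin k => ν := by
          gcongr with y
          rw [← ofReal_norm]
          exact ENNReal.ofReal_le_ofReal (hξ k y)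
      _ = ENNReal.ofReal ((ξ * ν.real Set.univ) ^ k) := by
          rw [lintegral_const, Measure.pi_univ, prod_const, card_fin, mul_pow,
            ENNReal.ofReal_mul' (by positivity), ENNReal.ofReal_pow measureReal_nonneg,
            ofReal_measureReal]
  rw [div_eq_inv_mul, ENNReal.ofReal_mul (by positivity), l1Term, enorm_altWeight]
  gcongr

variable [SigmaFinite ν]

lemma l1Term_restrict_le (s : Set E) (F : CF E) (k : ℕ) :
    l1Term (ν.restrict s) F k ≤ l1Term ν F k :=
  mul_le_mul_right (lintegral_pi_restrict_le s _) _

lemma MemL1.restrict (hF : MemL1 ν F) (s : Set E) : MemL1 (ν.restrict s) F :=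
  ⟨hF.measurable, ne_top_of_le_ne_top hF.l1Norm_ne_top
    (ENNReal.tsum_le_tsum (l1Term_restrict_le s F))⟩

end FiniteVolume

section ThermodynamicLimit

variable {E : Type} [MeasurableSpace E] {ν : Measure E} [SigmaFinite ν] {F G : CF E}
  {ι : Type*} {l : Filter ι} [l.IsCountablyGenerated] {Λ : ι → Set E}

lemma tendsto_altTerm_restrict (hΛ : AECover ν l Λ) (hF : MemL1 ν F) (k : ℕ) :
    Tendsto (fun i => altTerm (ν.restrict (Λ i)) F k) l (𝓝 (altTerm ν F k)) := by
  simp_rw [altTerm, ← Measure.restrict_pi_pi]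
  exact ((aecover_univ_pi hΛ).integral_tendsto_of_countably_generated
    (hF.integrable k)).const_mul _

lemma tendsto_alternatingIntegral_restrict (hΛ : AECover ν l Λ) (hF : MemL1 ν F) :
    Tendsto (fun i => alternatingIntegral (ν.restrict (Λ i)) F) l
      (𝓝 (alternatingIntegral ν F)) := by
  have norm_altTerm_le (i : ι) (k : ℕ) :
      ‖altTerm (ν.restrict (Λ i)) F k‖ ≤ (l1Term ν F k).toReal := by
    rw [← toReal_enorm]
    exact ENNReal.toReal_mono (ENNReal.ne_top_of_tsum_ne_top hF.l1Norm_ne_top k)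
      ((enorm_altTerm_le _ F k).trans (l1Term_restrict_le _ F k))
  exact tendsto_tsum_of_dominated_convergence (ENNReal.summable_toReal hF.l1Norm_ne_top)
    (tendsto_altTerm_restrict hΛ hF) (Eventually.of_forall norm_altTerm_le)

lemma alternatingIntegral_eq_of_tendsto_div [l.NeBot] (hΛ : AECover ν l Λ) (hF : MemL1 ν F)
    (hG : ∀ i, MemL1 (ν.restrict (Λ i)) G) {z : ℝ} (hz : z ≠ 0)
    (h : Tendsto (fun i => alternatingIntegral (ν.restrict (Λ i)) (conv F G) /
      alternatingIntegral (ν.restrict (Λ i)) G) l (𝓝 z)) :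
    alternatingIntegral ν F = z := by
  refine tendsto_nhds_unique (tendsto_alternatingIntegral_restrict hΛ hF) (h.congr' ?_)
  filter_upwards [h.eventually_ne hz] with i ratio_ne_zero
  rw [alternatingIntegral_conv (hF.restrict _) (hG i),
    mul_div_cancel_right₀ _ (div_ne_zero_iff.1 ratio_ne_zero).2]

end ThermodynamicLimit

section Janossy

variable {E : Type} [MeasurableSpace E]

/-- The Janossy density of a point process with correlation functions `ρ`, in a volume where the
reference measure is `ν`. -/
noncomputable def janossyDensity (ν : Measure E) (ρ : CF E) {n : ℕ} (x : Fin n → E) : ℝ :=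
  alternatingIntegral ν fun k y => ρ (n + k) (Fin.append x y)

lemma janossyDensity_nil (ν : Measure E) (ρ : CF E) (x : Fin 0 → E) :
    janossyDensity ν ρ x = alternatingIntegral ν ρ := by
  simp_rw [janossyDensity, Fin.append_left_nil x _ rfl, apply_comp_cast]

lemma janossyDensity_cons (ν : Measure E) (ρ : CF E) (a : E) {n : ℕ} (x : Fin n → E) :
    janossyDensity ν ρ (Fin.cons a x : Fin (n + 1) → E) = janossyDensity ν (D a ρ) x := by
  simp_rw [janossyDensity, Fin.append_cons, apply_comp_cast, D]

lemma janossyDensity_singleton (ν : Measure E) (ρ : CF E) (x : E) :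
    janossyDensity ν ρ ![x] = alternatingIntegral ν (D x ρ) := by
  rw [Matrix.vecCons, janossyDensity_cons, janossyDensity_nil]

lemma janossyDensity_pair (ν : Measure E) (ρ : CF E) (x₁ x₂ : E) :
    janossyDensity ν ρ ![x₁, x₂] = alternatingIntegral ν (D2 x₂ x₁ ρ) := by
  rw [Matrix.vecCons, janossyDensity_cons, janossyDensity_singleton, D2]

end Janossy

section FactorialBound

variable {E : Type} [MeasurableSpace E] {ν : Measure E} {F : CF E} {a C q : ℝ}

/-- The bound `∫ |F^{(k)}| dν^k ≤ k! C q^k` for `k ≥ 1`. The component `F^{(0)}` is left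
unconstrained, since it is known explicitly for the functionals this is applied to. -/
def HasFactorialBound (ν : Measure E) (F : CF E) (C q : ℝ) : Prop :=
  ∀ k ≥ 1, ∫⁻ y, ‖F k y‖ₑ ∂Measure.pi (fun _ => ν) ≤ ENNReal.ofReal (k.factorial * C * q ^ k)

namespace HasFactorialBound

lemma l1Norm_sub_smul_unit_le (hF : HasFactorialBound ν F C q) (hC : 0 ≤ C) (hq : 0 ≤ q)
    (hq' : q ≤ 1 / 2) (hF₀ : F 0 = a • unit 0) :
    l1Norm ν (F - a • unit) ≤ ENNReal.ofReal (2 * C * q) := by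
  have term_zero : l1Term ν (F - a • unit) 0 = 0 := by
    simp [l1Term, hF₀]
  have term_succ (k : ℕ) :
      l1Term ν (F - a • unit) (k + 1) ≤ ENNReal.ofReal (C * q * (1 / 2) ^ k) := by
    calc l1Term ν (F - a • unit) (k + 1)
        = ENNReal.ofReal ((k + 1).factorial : ℝ)⁻¹ *
            ∫⁻ y, ‖F (k + 1) y‖ₑ ∂Measure.pi fun _ => ν := by
          simp [l1Term, enorm_altWeight, unit]
      _ ≤ ENNReal.ofReal ((k + 1).factorial : ℝ)⁻¹ *
            ENNReal.ofReal ((k + 1).factorial * C * q ^ (k + 1)) := by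
          gcongr
          exact hF _ k.succ_pos
      _ = ENNReal.ofReal (C * q * q ^ k) := by
          rw [← ENNReal.ofReal_mul (by positivity), pow_succ', mul_assoc, mul_assoc, ← mul_assoc,
            inv_mul_cancel₀ (by positivity), one_mul]
      _ ≤ ENNReal.ofReal (C * q * (1 / 2) ^ k) := by gcongr
  have summable_geometric : Summable fun k : ℕ => C * q * (1 / 2 : ℝ) ^ k :=
    summable_geometric_two.mul_left _
  calc l1Norm ν (F - a • unit)
      = ∑' k, l1Term ν (F - a • unit) (k + 1) := by
        rw [l1Norm, tsum_eq_zero_add' ENNReal.summable, term_zero, zero_add]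
    _ ≤ ∑' k : ℕ, ENNReal.ofReal (C * q * (1 / 2) ^ k) := ENNReal.tsum_le_tsum term_succ
    _ = ENNReal.ofReal (2 * C * q) := by
        rw [← ENNReal.ofReal_tsum_of_nonneg (fun k => by positivity) summable_geometric,
          tsum_mul_left, tsum_geometric_two]
        ring_nf

lemma memL1 (hF : HasFactorialBound ν F C q) (hC : 0 ≤ C) (hq : 0 ≤ q) (hq' : q ≤ 1 / 2)
    (hF₀ : F 0 = a • unit 0) (hFm : ∀ n, Measurable (F n)) : MemL1 ν F := by
  have memL1_sub : MemL1 ν (F - a • unit) :=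
    ⟨fun n => (hFm n).sub ((measurable_unit n).const_smul a), ne_top_of_le_ne_top
      ENNReal.ofReal_ne_top (hF.l1Norm_sub_smul_unit_le hC hq hq' hF₀)⟩
  exact sub_add_cancel F (a • unit) ▸ memL1_sub.add (MemL1.unit.smul a)

lemma l1Norm_inv_smul_sub_smul_unit_le {s : ℝ} (hF : HasFactorialBound ν F (s * C) q) (hs : 0 < s)
    (hC : 0 ≤ C) (hq : 0 ≤ q) (hq' : q ≤ 1 / 2) (hF₀ : F 0 = (s * a) • unit 0) :
    l1Norm ν (s⁻¹ • F - a • unit) ≤ ENNReal.ofReal (2 * C * q) := by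
  have factor_out : s⁻¹ • F - a • unit = s⁻¹ • (F - (s * a) • unit) := by
    rw [smul_sub, smul_smul, inv_mul_cancel_left₀ hs.ne']
  rw [factor_out, l1Norm_smul, Real.enorm_of_nonneg (by positivity)]
  calc _ ≤ ENNReal.ofReal s⁻¹ * ENNReal.ofReal (2 * (s * C) * q) := by
        gcongr
        exact hF.l1Norm_sub_smul_unit_le (by positivity) hq hq' hF₀
    _ = ENNReal.ofReal (2 * C * q) := by
        rw [← ENNReal.ofReal_mul (by positivity)]
        congr 1
        field_simp

lemma mono_left {C' : ℝ} (hF : HasFactorialBound ν F C q) (hq : 0 ≤ q) (hC : C ≤ C') :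
    HasFactorialBound ν F C' q := fun k hk => (hF k hk).trans (by gcongr)

lemma of_factorial_succ (hC : 0 ≤ C) (hq : 0 ≤ q)
    (hF : ∀ k ≥ 1, ∫⁻ y, ‖F k y‖ₑ ∂Measure.pi (fun _ => ν) ≤
      ENNReal.ofReal ((k + 1).factorial * C * q ^ k)) : HasFactorialBound ν F C (2 * q) := by
  refine fun k hk => (hF k hk).trans (ENNReal.ofReal_le_ofReal ?_)
  have factorial_le : ((k + 1).factorial : ℝ) ≤ 2 ^ k * k.factorial := by
    rw [Nat.factorial_succ]
    exact_mod_cast Nat.mul_le_mul_right _ (Nat.lt_two_pow_self (n := k))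
  calc (k + 1).factorial * C * q ^ k
      ≤ 2 ^ k * k.factorial * C * q ^ k := by gcongr
    _ = k.factorial * C * (2 * q) ^ k := by ring

lemma of_forall_restrict [SigmaFinite ν] {ι : Type*} {l : Filter ι} [l.NeBot]
    [l.IsCountablyGenerated] {Λ : ι → Set E} (hΛ : AECover ν l Λ) (hFm : ∀ n, Measurable (F n))
    (hF : ∀ i, HasFactorialBound (ν.restrict (Λ i)) F C q) : HasFactorialBound ν F C q :=
  fun k hk => lintegral_pi_le_of_forall_restrict_le hΛ (hFm k).enorm.aemeasurable
    fun i => hF i k hk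

end HasFactorialBound

end FactorialBound

section TwoPointKernel

variable {E : Type} [MeasurableSpace E] {ν : Measure E} [SigmaFinite ν]

lemma measurable_and_l1Norm_sub_smul_unit_le_of_conv_eq {a ε δ η b : ℝ} {X F G : CF E}
    (hF : ∀ n, Measurable (F n)) (hG : ∀ n, Measurable (G n)) (hF₀ : F 0 = unit 0)
    (h : conv X F = G) (hG_le : l1Norm ν (G - a • unit) ≤ ENNReal.ofReal ε)
    (hF_le : l1Norm ν (F - unit) ≤ ENNReal.ofReal δ)
    (haF_le : ‖a‖ₑ * l1Norm ν (F - unit) ≤ ENNReal.ofReal η)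
    (hε : 0 ≤ ε) (hδ : 0 ≤ δ) (hη : 0 ≤ η) (hb : 0 ≤ b) (hle : ε + η + b * δ ≤ b) :
    (∀ n, Measurable (X n)) ∧ l1Norm ν (X - a • unit) ≤ ENNReal.ofReal b := by
  have measurable_a_unit (n : ℕ) : Measurable ((a • (unit : CF E)) n) :=
    (measurable_unit n).const_smul a
  have closing : l1Norm ν (G - a • unit) + ‖a‖ₑ * l1Norm ν (F - unit) +
      ENNReal.ofReal b * l1Norm ν (F - unit) ≤ ENNReal.ofReal b := by
    calc _ ≤ ENNReal.ofReal ε + ENNReal.ofReal η + ENNReal.ofReal b * ENNReal.ofReal δ := by gcongr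
      _ = ENNReal.ofReal (ε + η + b * δ) := by
        rw [← ENNReal.ofReal_mul hb, ← ENNReal.ofReal_add hε hη,
          ← ENNReal.ofReal_add (by positivity) (by positivity)]
      _ ≤ ENNReal.ofReal b := ENNReal.ofReal_le_ofReal hle
  obtain ⟨measurable_remainder, remainder_le⟩ :=
    measurable_and_l1Norm_le_of_conv_eq (w := X - a • unit) (u := F - unit)
      (g := G - a • unit) (fun n => (hF n).sub (measurable_unit n))
      (fun n => (hG n).sub (measurable_a_unit n)) (by simp [hF₀]) (by simp [h]) closing
  refine ⟨fun n => ?_, remainder_le⟩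
  simpa using (measurable_remainder n).add (measurable_a_unit n)

/-- Inverting `d₂`, `d₁` and `exp∗` one after the other weakens the bound from `1 / 64` to `1 / 16`,
`1 / 8` and `1 / 4`. -/
lemma memL1_of_eq_conv_starExp {c : ℝ} {T d₁ d₂ ω : CF E}
    (hT : ∀ n, Measurable (T n)) (hd₁ : ∀ n, Measurable (d₁ n)) (hd₂ : ∀ n, Measurable (d₂ n))
    (hd₁₀ : d₁ 0 = unit 0) (hd₂₀ : d₂ 0 = unit 0) (hω₀ : ω 0 = 0)
    (h : T = conv (conv (starExp ω - c • unit) d₁) d₂)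
    (hT_le : l1Norm ν (T - (1 - c) • unit) ≤ ENNReal.ofReal (1 / 64))
    (hd₁_le : l1Norm ν (d₁ - unit) ≤ ENNReal.ofReal (1 / 4))
    (hd₂_le : l1Norm ν (d₂ - unit) ≤ ENNReal.ofReal (1 / 4))
    (hcd₁_le : ‖1 - c‖ₑ * l1Norm ν (d₁ - unit) ≤ ENNReal.ofReal (1 / 32))
    (hcd₂_le : ‖1 - c‖ₑ * l1Norm ν (d₂ - unit) ≤ ENNReal.ofReal (1 / 32)) :
    MemL1 ν ω ∧ MemL1 ν (starExp ω) := by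
  obtain ⟨measurable_left, left_le⟩ :=
    measurable_and_l1Norm_sub_smul_unit_le_of_conv_eq (b := 1 / 16) hd₂ hT hd₂₀ h.symm
      hT_le hd₂_le hcd₂_le (by norm_num) (by norm_num) (by norm_num) (by norm_num) (by norm_num)
  obtain ⟨measurable_factor, factor_le⟩ :=
    measurable_and_l1Norm_sub_smul_unit_le_of_conv_eq (b := 1 / 8) hd₁ measurable_left hd₁₀ rfl
      left_le hd₁_le hcd₁_le (by norm_num) (by norm_num) (by norm_num) (by norm_num) (by norm_num)
  have factor_eq : starExp ω - c • unit - (1 - c) • unit = starExp ω - unit := by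
    rw [sub_smul, one_smul, sub_sub, add_sub_cancel]
  have measurable_starExp_sub (n : ℕ) : Measurable ((starExp ω - (unit : CF E)) n) := by
    rw [← factor_eq]
    exact (measurable_factor n).sub ((measurable_unit n).const_smul (1 - c))
  have closing : l1Norm ν (starExp ω - unit) +
      ENNReal.ofReal (1 / 4) ^ 2 * (1 - ENNReal.ofReal (1 / 4))⁻¹ ≤ ENNReal.ofReal (1 / 4) := by
    calc _ ≤ ENNReal.ofReal (1 / 8) +
          ENNReal.ofReal (1 / 4) ^ 2 * (1 - ENNReal.ofReal (1 / 4))⁻¹ := by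
          gcongr
          exact factor_eq ▸ factor_le
      _ = ENNReal.ofReal (1 / 8 + (1 / 4) ^ 2 * (1 - 1 / 4)⁻¹) := by
          rw [← ENNReal.ofReal_one, ← ENNReal.ofReal_sub _ (by norm_num),
            ← ENNReal.ofReal_inv_of_pos (by norm_num), ← ENNReal.ofReal_pow (by norm_num),
            ← ENNReal.ofReal_mul (by norm_num), ← ENNReal.ofReal_add (by norm_num) (by norm_num)]
      _ ≤ ENNReal.ofReal (1 / 4) := ENNReal.ofReal_le_ofReal (by norm_num)
  obtain ⟨measurable_ω, ω_le⟩ :=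
    measurable_and_l1Norm_le_of_starExp_eq hω₀ measurable_starExp_sub (by simp) closing
  have memL1_starExp_sub : MemL1 ν (starExp ω - unit) :=
    ⟨measurable_starExp_sub, ne_top_of_le_ne_top ENNReal.ofReal_ne_top (factor_eq ▸ factor_le)⟩
  exact ⟨⟨measurable_ω, ne_top_of_le_ne_top ENNReal.ofReal_ne_top ω_le⟩,
    add_sub_cancel unit (starExp ω) ▸ MemL1.unit.add memL1_starExp_sub⟩

end TwoPointKernel

section SmallDensity

/-- An explicit admissible smallness threshold `D₀` for the expansion of the pair interaction. The
three summands give room for the geometric series, for inverting the one-point derivatives of the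
truncated correlation functions, and for the two-point derivative, respectively. -/
noncomputable def expansionRadius (M A dr : ℝ) : ℝ :=
  (4 + 64 * (1 + dr) * (M * A) + 256 * dr * (M * A ^ 2))⁻¹

variable {M A dr Dρ : ℝ}

lemma expansionRadius_pos (hM : 0 ≤ M) (hA : 0 ≤ A) (hdr : 0 ≤ dr) :
    0 < expansionRadius M A dr := by
  unfold expansionRadius
  positivity

lemma bounds_of_le_expansionRadius (hM : 0 ≤ M) (hA : 0 ≤ A) (hdr : 0 ≤ dr) (hDρ : 0 ≤ Dρ)
    (h : Dρ ≤ expansionRadius M A dr) :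
    Dρ ≤ 1 / 4 ∧ 2 * (M * A) * Dρ ≤ 1 / 4 ∧ (1 + dr) * (2 * (M * A) * Dρ) ≤ 1 / 32 ∧
      2 * (dr * (M * A ^ 2)) * (2 * Dρ) ≤ 1 / 64 := by
  rw [expansionRadius, ← one_div, le_div_iff₀ (by positivity)] at h
  have hMA : 0 ≤ Dρ * (M * A) := by positivity
  have hdrMA : 0 ≤ Dρ * (dr * (M * A)) := by positivity
  have hdrMA2 : 0 ≤ Dρ * (dr * (M * A ^ 2)) := by positivity
  refine ⟨?_, ?_, ?_, ?_⟩ <;> linarith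

end SmallDensity

section PairInteraction

variable {E : Type} {M A dr Dρ r₁ r₂ p : ℝ} {f₁ f₂ f₁₂ ω : CF E}

lemma apply_zero_eq_of_inv_smul_eq_conv (hr₁ : r₁ ≠ 0) (hr₂ : r₂ ≠ 0) (hp : p ≠ 0)
    (hf₁₀ : f₁ 0 = r₁ • unit 0) (hf₂₀ : f₂ 0 = r₂ • unit 0)
    (hω : p⁻¹ • f₁₂ = conv (conv (starExp ω - (r₁ * r₂ / p) • unit) (r₁⁻¹ • f₁)) (r₂⁻¹ • f₂)) :
    f₁₂ 0 = (p * (1 - r₁ * r₂ / p)) • unit 0 := by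
  funext y
  have at_zero : p⁻¹ * f₁₂ 0 y = (1 - r₁ * r₂ / p) * (r₁⁻¹ * r₁) * (r₂⁻¹ * r₂) := by
    simpa [conv_zero_apply, starExp_zero, hf₁₀, hf₂₀, unit] using congrFun (congrFun hω 0) y
  rw [inv_mul_cancel₀ hr₁, inv_mul_cancel₀ hr₂, mul_one, mul_one, inv_mul_eq_iff_eq_mul₀ hp]
    at at_zero
  simpa [unit] using at_zero

variable [MeasurableSpace E] {ν : Measure E}

lemma HasFactorialBound.l1Norm_inv_smul_sub_unit_le {f : CF E}
    (hf : HasFactorialBound ν f (r₁ * (M * A)) Dρ) (hr₁ : 0 < r₁) (hMA : 0 ≤ M * A)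
    (hDρ : 0 ≤ Dρ) (hDρ' : Dρ ≤ 1 / 2) (hf₀ : f 0 = r₁ • unit 0) :
    l1Norm ν (r₁⁻¹ • f - unit) ≤ ENNReal.ofReal (2 * (M * A) * Dρ) := by
  have := hf.l1Norm_inv_smul_sub_smul_unit_le (a := 1) hr₁ hMA hDρ hDρ' (by rwa [mul_one])
  rwa [one_smul] at this

variable [SigmaFinite ν]

lemma memL1_of_le_expansionRadius (hM : 0 ≤ M) (hA : 0 ≤ A) (hdr : 0 ≤ dr) (hDρ : 0 ≤ Dρ)
    (hle : Dρ ≤ expansionRadius M A dr) (hr₁ : 0 < r₁) (hr₂ : 0 < r₂) (hp : 0 < p)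
    (hC : r₁ * r₂ ≤ dr * p) (hf₁ : ∀ n, Measurable (f₁ n)) (hf₂ : ∀ n, Measurable (f₂ n))
    (hf₁₂ : ∀ n, Measurable (f₁₂ n)) (hf₁₀ : f₁ 0 = r₁ • unit 0) (hf₂₀ : f₂ 0 = r₂ • unit 0)
    (hω₀ : ω 0 = 0) (hf₁_le : HasFactorialBound ν f₁ (r₁ * (M * A)) Dρ)
    (hf₂_le : HasFactorialBound ν f₂ (r₂ * (M * A)) Dρ)
    (hf₁₂_le : HasFactorialBound ν f₁₂ (r₁ * r₂ * (M * A ^ 2)) (2 * Dρ))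
    (hω : p⁻¹ • f₁₂ = conv (conv (starExp ω - (r₁ * r₂ / p) • unit) (r₁⁻¹ • f₁)) (r₂⁻¹ • f₂)) :
    MemL1 ν ω ∧ MemL1 ν (starExp ω) := by
  obtain ⟨Dρ_le, one_point_le, coeff_one_point_le, two_point_le⟩ :=
    bounds_of_le_expansionRadius hM hA hdr hDρ hle
  have coeff_le : ‖1 - r₁ * r₂ / p‖ₑ ≤ ENNReal.ofReal (1 + dr) := by
    rw [← ofReal_norm]
    refine ENNReal.ofReal_le_ofReal ((norm_sub_le _ _).trans ?_)
    rw [norm_one, Real.norm_of_nonneg (by positivity)]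
    gcongr
    exact (div_le_iff₀ hp).2 hC
  have coeff_one_point {F : CF E} (hF : l1Norm ν F ≤ ENNReal.ofReal (2 * (M * A) * Dρ)) :
      ‖1 - r₁ * r₂ / p‖ₑ * l1Norm ν F ≤ ENNReal.ofReal (1 / 32) :=
    (mul_le_mul' coeff_le hF).trans <| by
      rw [← ENNReal.ofReal_mul (by positivity)]
      exact ENNReal.ofReal_le_ofReal coeff_one_point_le
  have two_point : l1Norm ν (p⁻¹ • f₁₂ - (1 - r₁ * r₂ / p) • unit) ≤
      ENNReal.ofReal (2 * (dr * (M * A ^ 2)) * (2 * Dρ)) :=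
    have constant_le : r₁ * r₂ * (M * A ^ 2) ≤ p * (dr * (M * A ^ 2)) :=
      (mul_le_mul_of_nonneg_right hC (by positivity)).trans_eq (by ring)
    (hf₁₂_le.mono_left (by positivity) constant_le).l1Norm_inv_smul_sub_smul_unit_le hp
      (by positivity) (by positivity) (by linarith)
      (apply_zero_eq_of_inv_smul_eq_conv hr₁.ne' hr₂.ne' hp.ne' hf₁₀ hf₂₀ hω)
  have d₁_le :=
    hf₁_le.l1Norm_inv_smul_sub_unit_le hr₁ (by positivity) hDρ (by linarith) hf₁₀
  have d₂_le :=
    hf₂_le.l1Norm_inv_smul_sub_unit_le hr₂ (by positivity) hDρ (by linarith) hf₂₀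
  exact memL1_of_eq_conv_starExp (fun n => (hf₁₂ n).const_smul p⁻¹)
    (fun n => (hf₁ n).const_smul r₁⁻¹) (fun n => (hf₂ n).const_smul r₂⁻¹)
    (by simp [hf₁₀, hr₁.ne']) (by simp [hf₂₀, hr₂.ne']) hω₀ hω
    (two_point.trans (ENNReal.ofReal_le_ofReal two_point_le))
    (d₁_le.trans (ENNReal.ofReal_le_ofReal one_point_le))
    (d₂_le.trans (ENNReal.ofReal_le_ofReal one_point_le)) (coeff_one_point d₁_le)
    (coeff_one_point d₂_le)

lemma alternatingIntegral_add_mul_eq_of_inv_smul_eq_conv (hr₁ : r₁ ≠ 0) (hr₂ : r₂ ≠ 0)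
    (hp : p ≠ 0) (hf₁ : MemL1 ν f₁) (hf₂ : MemL1 ν f₂) (hω_mem : MemL1 ν ω)
    (hexp_mem : MemL1 ν (starExp ω)) (hω₀ : ω 0 = 0)
    (hω : p⁻¹ • f₁₂ = conv (conv (starExp ω - (r₁ * r₂ / p) • unit) (r₁⁻¹ • f₁)) (r₂⁻¹ • f₂)) :
    alternatingIntegral ν f₁₂ + alternatingIntegral ν f₁ * alternatingIntegral ν f₂ =
      p / (r₁ * r₂) * Real.exp (alternatingIntegral ν ω) *
        (alternatingIntegral ν f₁ * alternatingIntegral ν f₂) := by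
  have c_unit_mem : MemL1 ν (-(r₁ * r₂ / p) • unit) := MemL1.unit.smul _
  rw [sub_eq_add_neg, ← neg_smul] at hω
  have integrated := congrArg (alternatingIntegral ν) hω
  rw [alternatingIntegral_conv ((hexp_mem.add c_unit_mem).conv (hf₁.smul _)) (hf₂.smul _),
    alternatingIntegral_conv (hexp_mem.add c_unit_mem) (hf₁.smul _),
    alternatingIntegral_add hexp_mem c_unit_mem, alternatingIntegral_starExp hω_mem hω₀]
    at integrated
  simp only [alternatingIntegral_smul, alternatingIntegral_unit] at integrated
  rw [inv_mul_eq_iff_eq_mul₀ hp] at integrated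
  rw [integrated]
  field_simp
  ring

end PairInteraction

section TruncatedCorrelations

variable {E : Type} {ρ ρT : CF E}

lemma D_apply_zero_of_starExp_eq (hρT₀ : ρT 0 = 0) (hρT : starExp ρT = ρ) (x : E) :
    D x ρT 0 = ρ 1 ![x] • unit 0 := by
  funext y
  have one_point : D x ρ 0 y = D x ρT 0 y := by
    rw [← hρT, D_starExp x hρT₀, conv_zero_apply, starExp_zero]
    simp [unit]
  rw [← one_point, D, Subsingleton.elim y ![]]
  exact (mul_one _).symm

variable [MeasurableSpace E]

lemma measurable_D (hρ : ∀ n, Measurable (ρ n)) (x : E) (n : ℕ) : Measurable (D x ρ n) :=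
  (hρ (n + 1)).comp <| measurable_pi_iff.2 <| Fin.cases measurable_const measurable_pi_apply

lemma measurable_of_starExp_eq (hρT₀ : ρT 0 = 0) (hρT : starExp ρT = ρ)
    (hρ : ∀ n, Measurable (ρ n)) : ∀ n, Measurable (ρT n) :=
  (measurable_and_l1Norm_le_of_starExp_eq (ν := (0 : Measure E)) (b := ∞)
    (w := ρ - unit) hρT₀ (fun n => (hρ n).sub (measurable_unit n)) (by simp [hρT]) le_top).1

variable {ν : Measure E} [SigmaFinite ν] {ι : Type*} {l : Filter ι} [l.NeBot]
  [l.IsCountablyGenerated] {Λ : ι → Set E} {z : ℝ}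

lemma alternatingIntegral_D_eq_of_tendsto_janossyDensity (hΛ : AECover ν l Λ)
    (hρ : ∀ i, MemL1 (ν.restrict (Λ i)) ρ) (hρT₀ : ρT 0 = 0) (hρT : starExp ρT = ρ) {x : E}
    (hD : MemL1 ν (D x ρT)) (hz : z ≠ 0)
    (h : Tendsto (fun i => janossyDensity (ν.restrict (Λ i)) ρ ![x] /
      janossyDensity (ν.restrict (Λ i)) ρ ![]) l (𝓝 z)) :
    alternatingIntegral ν (D x ρT) = z := by
  have D_eq : D x ρ = conv (D x ρT) ρ := by rw [← hρT, D_starExp x hρT₀]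
  simp_rw [janossyDensity_singleton, janossyDensity_nil, D_eq] at h
  exact alternatingIntegral_eq_of_tendsto_div hΛ hD hρ hz h

lemma alternatingIntegral_D2_add_mul_eq_of_tendsto_janossyDensity (hΛ : AECover ν l Λ)
    (hρ : ∀ i, MemL1 (ν.restrict (Λ i)) ρ) (hρT₀ : ρT 0 = 0) (hρT : starExp ρT = ρ)
    (hρT_symm : IsSymm ρT) {x₁ x₂ : E} (hD₁ : MemL1 ν (D x₁ ρT)) (hD₂ : MemL1 ν (D x₂ ρT))
    (hD₁₂ : MemL1 ν (D2 x₁ x₂ ρT)) (hz : z ≠ 0)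
    (h : Tendsto (fun i => janossyDensity (ν.restrict (Λ i)) ρ ![x₁, x₂] /
      janossyDensity (ν.restrict (Λ i)) ρ ![]) l (𝓝 z)) :
    alternatingIntegral ν (D2 x₁ x₂ ρT) +
      alternatingIntegral ν (D x₁ ρT) * alternatingIntegral ν (D x₂ ρT) = z := by
  have D2_eq : D2 x₂ x₁ ρ = conv (D2 x₁ x₂ ρT + conv (D x₁ ρT) (D x₂ ρT)) ρ := by
    rw [← hρT, D2_starExp x₂ x₁ hρT₀, D2_comm hρT_symm, conv_comm (D x₂ ρT)]
  simp_rw [janossyDensity_pair, janossyDensity_nil, D2_eq] at h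
  rw [← alternatingIntegral_conv hD₁ hD₂, ← alternatingIntegral_add hD₁₂ (hD₁.conv hD₂)]
  exact alternatingIntegral_eq_of_tendsto_div hΛ (hD₁₂.add (hD₁.conv hD₂)) hρ hz h

end TruncatedCorrelations

end CF

lemma eq_neg_log_sub_of_exp_eq {a b φ q s : ℝ} (hq : 0 < q)
    (h : Real.exp (a + b - φ) = q * Real.exp s * (Real.exp a * Real.exp b)) :
    φ = -Real.log q - s := by
  have exponents : a + b - φ = Real.log q + s + (a + b) := by
    rw [← Real.exp_eq_exp, h, Real.exp_add (Real.log q + s), Real.exp_add a,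
      Real.exp_add (Real.log q), Real.exp_log hq]
  linarith

open CF in
theorem pair_interaction_expansion_general {E : Type} [MeasurableSpace E] {ν : Measure E}
    [SigmaFinite ν] {ι : Type*} {l : Filter ι} [l.NeBot] [l.IsCountablyGenerated]
    {Λ : ι → Set E} (hΛ : AECover ν l Λ) {M A dr Dρ r₁ r₂ μ₁ μ₂ φ : ℝ} {x₁ x₂ : E}
    {ρ ρT ω : CF E} (hM : 0 ≤ M) (hA : 0 ≤ A) (hdr : 0 ≤ dr) (hDρ : 0 ≤ Dρ)
    (hDρ_le : Dρ ≤ expansionRadius M A dr) (hr₁ : 0 < r₁) (hr₂ : 0 < r₂)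
    (hρ : ∀ i, MemL1 (ν.restrict (Λ i)) ρ) (hρ₁ : ρ 1 ![x₁] = r₁) (hρ₂ : ρ 1 ![x₂] = r₂)
    (hρT₀ : ρT 0 = 0) (hρT_symm : IsSymm ρT) (hρT : starExp ρT = ρ)
    (hA₁ : Tendsto (fun i => janossyDensity (ν.restrict (Λ i)) ρ ![x₁] /
      janossyDensity (ν.restrict (Λ i)) ρ ![]) l (𝓝 (Real.exp μ₁)))
    (hA₂ : Tendsto (fun i => janossyDensity (ν.restrict (Λ i)) ρ ![x₂] /
      janossyDensity (ν.restrict (Λ i)) ρ ![]) l (𝓝 (Real.exp μ₂)))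
    (hA₁₂ : Tendsto (fun i => janossyDensity (ν.restrict (Λ i)) ρ ![x₁, x₂] /
      janossyDensity (ν.restrict (Λ i)) ρ ![]) l (𝓝 (Real.exp (μ₁ + μ₂ - φ))))
    (hB₁ : HasFactorialBound ν (D x₁ ρT) (r₁ * (M * A)) Dρ)
    (hB₂ : HasFactorialBound ν (D x₂ ρT) (r₂ * (M * A)) Dρ)
    (hB₁₂ : HasFactorialBound ν (D2 x₁ x₂ ρT) (r₁ * r₂ * (M * A ^ 2)) (2 * Dρ))
    (hC : r₁ * r₂ ≤ dr * ρ 2 ![x₁, x₂]) (hω₀ : ω 0 = 0)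
    (hω : (ρ 2 ![x₁, x₂])⁻¹ • D2 x₁ x₂ ρT =
      conv (conv (starExp ω - (r₁ * r₂ / ρ 2 ![x₁, x₂]) • unit) (r₁⁻¹ • D x₁ ρT))
        (r₂⁻¹ • D x₂ ρT)) :
    (Summable fun k => |altTerm ν ω k|) ∧
      φ = -Real.log (ρ 2 ![x₁, x₂] / (r₁ * r₂)) - alternatingIntegral ν ω := by
  have hp : 0 < ρ 2 ![x₁, x₂] := pos_of_mul_pos_right ((mul_pos hr₁ hr₂).trans_le hC) hdr
  have hDρ_half : 2 * Dρ ≤ 1 / 2 := by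
    linarith [(bounds_of_le_expansionRadius hM hA hdr hDρ hDρ_le).1]
  have measurable_ρT := measurable_of_starExp_eq hρT₀ hρT (hρ l.nonempty_of_neBot.some).measurable
  have measurable_D2 := measurable_D (measurable_D measurable_ρT x₂) x₁
  have hD₁₀ : D x₁ ρT 0 = r₁ • unit 0 := hρ₁ ▸ D_apply_zero_of_starExp_eq hρT₀ hρT x₁
  have hD₂₀ : D x₂ ρT 0 = r₂ • unit 0 := hρ₂ ▸ D_apply_zero_of_starExp_eq hρT₀ hρT x₂
  have hD₁₂₀ := apply_zero_eq_of_inv_smul_eq_conv hr₁.ne' hr₂.ne' hp.ne' hD₁₀ hD₂₀ hω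
  have hD₁ := hB₁.memL1 (by positivity) hDρ (by linarith) hD₁₀ (measurable_D measurable_ρT x₁)
  have hD₂ := hB₂.memL1 (by positivity) hDρ (by linarith) hD₂₀ (measurable_D measurable_ρT x₂)
  have hD₁₂ := hB₁₂.memL1 (by positivity) (by positivity) hDρ_half hD₁₂₀ measurable_D2
  obtain ⟨hω_mem, hexp_mem⟩ := memL1_of_le_expansionRadius hM hA hdr hDρ hDρ_le hr₁ hr₂ hp hC
    (measurable_D measurable_ρT x₁) (measurable_D measurable_ρT x₂) measurable_D2 hD₁₀ hD₂₀ hω₀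
    hB₁ hB₂ hB₁₂ hω
  refine ⟨hω_mem.summable_norm_altTerm,
    eq_neg_log_sub_of_exp_eq (a := μ₁) (b := μ₂) (by positivity) ?_⟩
  rw [← alternatingIntegral_D2_add_mul_eq_of_tendsto_janossyDensity hΛ hρ hρT₀ hρT hρT_symm
      hD₁ hD₂ hD₁₂ (Real.exp_ne_zero _) hA₁₂,
    alternatingIntegral_add_mul_eq_of_inv_smul_eq_conv hr₁.ne' hr₂.ne' hp.ne' hD₁ hD₂ hω_mem
      hexp_mem hω₀ hω,
    alternatingIntegral_D_eq_of_tendsto_janossyDensity hΛ hρ hρT₀ hρT hD₁ (Real.exp_ne_zero _) hA₁,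
    alternatingIntegral_D_eq_of_tendsto_janossyDensity hΛ hρ hρT₀ hρT hD₂ (Real.exp_ne_zero _) hA₂]

lemma tendsto_atTop_of_forall_abs_sub_le {α : Type*} [Preorder α] [IsDirectedOrder α] [Nonempty α]
    {u : α → ℝ} {z : ℝ} (h : ∀ ε > 0, ∃ R₀, ∀ R ≥ R₀, |u R - z| ≤ ε) : Tendsto u atTop (𝓝 z) :=
  Metric.nhds_basis_closedBall.tendsto_right_iff.2 fun ε hε => eventually_atTop.2 (h ε hε)

namespace CF

section Euclidean

variable {d : ℕ} {ρ ρT : CF (Euc d)} {M A Dρ r : ℝ}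

lemma aecover_ball_zero : AECover volume atTop (Metric.ball (0 : Euc d)) := aecover_ball tendsto_id

lemma memL1_restrict_ball {ξ : ℝ} (hρ : ∀ n, Measurable (ρ n)) (hξ : ∀ n x, ‖ρ n x‖ ≤ ξ ^ n)
    (R : ℝ) : MemL1 (volume.restrict (Metric.ball (0 : Euc d) R)) ρ :=
  have : IsFiniteMeasure (volume.restrict (Metric.ball (0 : Euc d) R)) :=
    isFiniteMeasure_restrict.2 measure_ball_lt_top.ne
  memL1_of_norm_le_pow hρ hξ

lemma hasFactorialBound_D_of_forall_ball (hρT : ∀ n, Measurable (ρT n)) (x : Euc d)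
    (hB : ∀ R, ∀ k ≥ 1,
      ∫⁻ y, ENNReal.ofReal |ρT (k + 1) (Fin.cons x y)| ∂(piRestrict d (Metric.ball 0 R) k) ≤
        ENNReal.ofReal (k.factorial * M * A * Dρ ^ k * r)) :
    HasFactorialBound volume (D x ρT) (r * (M * A)) Dρ := by
  refine .of_forall_restrict aecover_ball_zero (measurable_D hρT x) fun R k hk => ?_
  simp_rw [Real.enorm_eq_ofReal_abs]
  exact (hB R k hk).trans_eq (by ring_nf)

lemma hasFactorialBound_D2_of_forall_ball (hρT : ∀ n, Measurable (ρT n)) (hρT_symm : IsSymm ρT)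
    (hM : 0 ≤ M) (hDρ : 0 ≤ Dρ) (x₁ x₂ : Euc d)
    (hB : ∀ R, ∀ k ≥ 1,
      ∫⁻ y, ENNReal.ofReal |ρT (k + 2) (Fin.cons x₁ (Fin.cons x₂ y))|
          ∂(piRestrict d (Metric.ball 0 R) k) ≤
        ENNReal.ofReal ((k + 1).factorial * M * A ^ 2 * Dρ ^ k * r ^ 2)) :
    HasFactorialBound volume (D2 x₁ x₂ ρT) (r * r * (M * A ^ 2)) (2 * Dρ) := by
  rw [D2_comm hρT_symm]
  refine .of_forall_restrict aecover_ball_zero (measurable_D (measurable_D hρT x₁) x₂) fun R =>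
    .of_factorial_succ (mul_nonneg (mul_self_nonneg r) (by positivity)) hDρ fun k hk => ?_
  simp_rw [Real.enorm_eq_ofReal_abs]
  exact (hB R k hk).trans_eq (by ring_nf)

end Euclidean

end CF

open CF MeasureTheory in
/-- Theorem 3.1, expansion of the pair interaction. -/
theorem pair_interaction_expansion (d : ℕ) (hd : 1 ≤ d)
    (M A dr : ℝ) (hM : 0 < M) (hA : 0 < A) (hdr : 0 < dr) :
    ∃ D₀ > (0 : ℝ),
      ∀ (Dρ μ ξ r rad : ℝ) (ρ ρT : CF (Euc d)) (H : Euc d → Euc d → ℝ)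
        (ω : Euc d → Euc d → CF (Euc d)),
        0 < Dρ → Dρ ≤ D₀ → 0 < ξ → 0 < r → 0 < rad →
        ρ 0 = 1 → IsSymm ρ → (∀ n, Measurable (ρ n)) →
        (∀ n x, 0 ≤ ρ n x) →
        -- Ruelle bound
        (∀ (n : ℕ) (x : Fin n → Euc d), ρ n x ≤ ξ ^ n) →
        -- translation invariance
        (∀ (n : ℕ) (a : Euc d) (x : Fin n → Euc d), ρ n (fun i => x i + a) = ρ n x) →
        -- constant density
        (∀ x : Euc d, ρ 1 ![x] = r) →
        ρT 0 = 0 → IsSymm ρT → starExp ρT = ρ →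
        -- the pair interaction is symmetric and measurable
        (∀ x₁ x₂, H x₁ x₂ = H x₂ x₁) →
        Measurable (fun p : Euc d × Euc d => H p.1 p.2) →
        -- Assumption A for n = 1 and n = 2
        (∀ Δ : Set (Euc d), Bornology.IsBounded Δ →
          ∀ ε > (0 : ℝ), ∃ R₀ : ℝ, ∀ R ≥ R₀, ∀ x ∈ Δ,
            |janossy d ρ (Metric.ball 0 R) 1 ![x] /
                janossy d ρ (Metric.ball 0 R) 0 ![] - Real.exp μ| ≤ ε) →
        (∀ Δ : Set (Euc d), Bornology.IsBounded Δ →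
          ∀ ε > (0 : ℝ), ∃ R₀ : ℝ, ∀ R ≥ R₀, ∀ x₁ ∈ Δ, ∀ x₂ ∈ Δ,
            |janossy d ρ (Metric.ball 0 R) 2 ![x₁, x₂] /
                janossy d ρ (Metric.ball 0 R) 0 ![] -
              Real.exp (2 * μ - H x₁ x₂)| ≤ ε) →
        -- Assumption B for m = 1 and m = 2
        (∀ Λ : Set (Euc d), Bornology.IsBounded Λ → MeasurableSet Λ →
          ∀ (k : ℕ), 1 ≤ k → ∀ x : Euc d,
            ∫⁻ y, ENNReal.ofReal |ρT (k + 1) (Fin.cons x y)| ∂(piRestrict d Λ k) ≤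
              ENNReal.ofReal (k.factorial * M * A * Dρ ^ k * r)) →
        (∀ Λ : Set (Euc d), Bornology.IsBounded Λ → MeasurableSet Λ →
          ∀ (k : ℕ), 1 ≤ k → ∀ x₁ x₂ : Euc d,
            ∫⁻ y, ENNReal.ofReal |ρT (k + 2) (Fin.cons x₁ (Fin.cons x₂ y))|
                ∂(piRestrict d Λ k) ≤
              ENNReal.ofReal ((k + 1).factorial * M * A ^ 2 * Dρ ^ k * r ^ 2)) →
        -- Assumption C at distance `rad`
        (∀ x₁ x₂ : Euc d, rad ≤ dist x₁ x₂ → r ^ 2 ≤ dr * ρ 2 ![x₁, x₂]) →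
        -- the two-point kernels
        (∀ x₁ x₂ : Euc d, ρ 2 ![x₁, x₂] ≠ 0 →
          ω x₁ x₂ 0 = 0 ∧ IsSymm (ω x₁ x₂) ∧
            (ρ 2 ![x₁, x₂])⁻¹ • D2 x₁ x₂ ρT =
              conv (conv (starExp (ω x₁ x₂) - (r ^ 2 / ρ 2 ![x₁, x₂]) • unit)
                  (r⁻¹ • D x₁ ρT))
                (r⁻¹ • D x₂ ρT)) →
        ∀ x₁ x₂ : Euc d, rad ≤ dist x₁ x₂ →
          Summable (fun k : ℕ =>
            |(-1 : ℝ) ^ k / k.factorial * ∫ y, ω x₁ x₂ k y ∂(piVol d k)|) ∧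
          H x₁ x₂ = -Real.log (ρ 2 ![x₁, x₂] / r ^ 2) -
            ∑' k : ℕ, (-1 : ℝ) ^ k / k.factorial *
              ∫ y, ω x₁ x₂ k y ∂(piVol d k) := by
  refine ⟨expansionRadius M A dr, expansionRadius_pos hM.le hA.le hdr.le, ?_⟩
  intro Dρ μ ξ r rad ρ ρT H ω hDρ hDρ_le _ hr _ _ _ hρ hρ_nonneg hξ _ hρ₁ hρT₀ hρT_symm hρT _ _
    hA₁ hA₂ hB₁ hB₂ hC hω x₁ x₂ hx
  have memL1_ball := memL1_restrict_ball hρ fun n x =>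
    (Real.norm_of_nonneg (hρ_nonneg n x)).trans_le (hξ n x)
  have tendsto_one_point (x : Euc d) := tendsto_atTop_of_forall_abs_sub_le fun ε hε =>
    (hA₁ {x} Bornology.isBounded_singleton ε hε).imp fun _ h R hR => h R hR x rfl
  have tendsto_two_point := tendsto_atTop_of_forall_abs_sub_le fun ε hε =>
    (hA₂ {x₁, x₂} (Set.toFinite _).isBounded ε hε).imp fun _ h R hR =>
      h R hR x₁ (by simp) x₂ (by simp)
  have measurable_ρT := measurable_of_starExp_eq hρT₀ hρT hρ
  have one_point_bound (x : Euc d) := hasFactorialBound_D_of_forall_ball measurable_ρT x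
    fun R k hk => hB₁ _ Metric.isBounded_ball measurableSet_ball k hk x
  have two_point_bound := hasFactorialBound_D2_of_forall_ball measurable_ρT hρT_symm hM.le hDρ.le
    x₁ x₂ fun R k hk => hB₂ _ Metric.isBounded_ball measurableSet_ball k hk x₁ x₂
  specialize hC x₁ x₂ hx
  obtain ⟨hω₀, -, hω⟩ := hω x₁ x₂ fun hp => by
    rw [hp, mul_zero] at hC
    exact hC.not_gt (by positivity)
  rw [pow_two] at hC hω ⊢
  rw [two_mul] at tendsto_two_point
  exact pair_interaction_expansion_general aecover_ball_zero hM.le hA.le hdr.le hDρ.le hDρ_le hr hr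
    memL1_ball (hρ₁ x₁) (hρ₁ x₂) hρT₀ hρT_symm hρT (tendsto_one_point x₁) (tendsto_one_point x₂)
    tendsto_two_point (one_point_bound x₁) (one_point_bound x₂) two_point_bound hC hω₀ hω
end

section
/- (Kirkwood closure process: closed form of the two-point expansion kernels, equation (4.7).) Let d ≥ 1, ς > 0 and let g : ℝ^d → [0,∞) be an even function; set h := g − 1. Define the configuration functional ρ over E = ℝ^d by ρ^{(0)} = 1 and ρ^{(n)}(x₁,…,x_n) := ς^n ∏_{1 ≤ i < j ≤ n} g(x_i − x_j), and let ρ_T ∈ A₀ be the unique functional with ρ = exp∗ ρ_T. Let x₁, x₂ ∈ ℝ^d with g(x₁ − x₂) ≠ 0 (so ρ^{(2)}(x₁,x₂) = ς² g(x₁−x₂) ≠ 0), and let F ∈ A₀ be the unique functional with D_{x₁,x₂} ρ = ρ^{(2)}(x₁,x₂) · exp∗ F. Then for every k ≥ 1 and all y₁,…,y_k ∈ ℝ^d: F^{(k)}(y₁,…,y_k) = ∏_{j=1}^{k} (1 + h(x₁ − y_j)) (1 + h(x₂ − y_j)) · ρ_T^{(k)}(y₁,…,y_k). -/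
open MeasureTheory Finset

/-!
For the Kirkwood functional `ρ`, inserting a particle at `x` multiplies `ρ` by `ς` and by a factor
`g (x - yⱼ)` for each remaining particle `yⱼ`. Hence `D_{x₁,x₂} ρ` is `ρ⁽²⁾(x₁, x₂)` times `ρ`
weighted by `∏ⱼ w (yⱼ)`, where `w y = g (x₁ - y) g (x₂ - y)`. Such a weight factors over every
splitting of a configuration in two, so multiplication by it commutes with convolution and with
`exp∗`, and `exp∗ F = w · exp∗ ρ_T = exp∗ (w · ρ_T)`. Now `exp∗` is injective on `A₀`, because the
`n`-th component of `Φ^{∗m}` with `m ≥ 2` only involves components of `Φ` below `n`.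
-/

namespace CF

variable {E : Type} {n : ℕ}

section Convolution

variable (Φ Ψ : CF E)

theorem apply_sub (x : Fin n → E) (I : Finset (Fin n)) {m : ℕ} (hm : #I = m) :
    Φ #I (sub x I) = Φ m (x ∘ I.orderEmbOfFin hm) := by
  subst hm
  rfl

theorem apply_sub_univ (x : Fin n → E) : Φ #univ (sub x univ) = Φ n x := by
  have hid : (id : Fin n → Fin n) = univ.orderEmbOfFin (card_fin n) :=
    orderEmbOfFin_unique _ (fun _ => mem_univ _) strictMono_id
  rw [apply_sub Φ x univ (card_fin n), ← hid, Function.comp_id]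

theorem conv_unit_s18 : conv Φ unit = Φ := by
  funext n x
  refine (sum_eq_single univ (fun I _ hI => ?_) (by simp)).trans ?_
  · have hIc : #Iᶜ ≠ 0 := by simpa using hI
    simp only [unit, if_neg hIc, mul_zero]
  · rw [apply_sub_univ Φ]
    simp [unit]

theorem starPow_one_s18 : starPow Φ 1 = Φ :=
  conv_unit_s18 Φ

theorem conv_apply_zero : conv Φ Ψ 0 = Φ 0 * Ψ 0 := by
  funext x
  have hcompl : (univ : Finset (Fin 0))ᶜ = univ := Subsingleton.elim _ _
  refine (Fintype.sum_subsingleton _ univ).trans ?_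
  rw [hcompl, apply_sub_univ Φ, apply_sub_univ Ψ, Pi.mul_apply]

theorem starPow_succ_apply_zero {Φ : CF E} (hΦ₀ : Φ 0 = 0) (m : ℕ) :
    starPow Φ (m + 1) 0 = 0 := by
  rw [starPow, conv_apply_zero, hΦ₀, zero_mul]

end Convolution

section Injectivity

variable {Φ Φ' Ψ Ψ' : CF E}

theorem conv_congr (hΦ : ∀ k ≤ n, Φ k = Φ' k) (hΨ : ∀ k ≤ n, Ψ k = Ψ' k) :
    conv Φ Ψ n = conv Φ' Ψ' n := by
  funext x
  refine sum_congr rfl fun I _ => ?_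
  rw [hΦ _ (card_finset_fin_le I), hΨ _ (card_finset_fin_le Iᶜ)]

theorem starPow_congr (hΦ : ∀ k ≤ n, Φ k = Φ' k) (m : ℕ) : starPow Φ m n = starPow Φ' m n := by
  induction m generalizing n with
  | zero => rfl
  | succ m ih => exact conv_congr hΦ fun k hk => ih fun l hl => hΦ l (hl.trans hk)

theorem conv_succ_congr (hΦ₀ : Φ 0 = 0) (hΨ₀ : Ψ 0 = 0)
    (hΦ : ∀ k ≤ n, Φ k = Φ' k) (hΨ : ∀ k ≤ n, Ψ k = Ψ' k) :
    conv Φ Ψ (n + 1) = conv Φ' Ψ' (n + 1) := by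
  funext x
  refine sum_congr rfl fun I _ => ?_
  have hcard : #I + #Iᶜ = n + 1 := by simp [card_add_card_compl]
  rcases Nat.eq_zero_or_pos #I with hI | hI
  · have hΦI : Φ #I = 0 := by rw [hI, hΦ₀]
    rw [← hΦ _ (by lia), hΦI, Pi.zero_apply, zero_mul, zero_mul]
  rcases Nat.eq_zero_or_pos #Iᶜ with hIc | hIc
  · have hΨIc : Ψ #Iᶜ = 0 := by rw [hIc, hΨ₀]
    rw [← hΨ _ (by lia), hΨIc, Pi.zero_apply, mul_zero, mul_zero]
  rw [hΦ _ (by lia), hΨ _ (by lia)]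

theorem starPow_add_two_succ_congr (hΦ₀ : Φ 0 = 0) (hΦ : ∀ k ≤ n, Φ k = Φ' k) (m : ℕ) :
    starPow Φ (m + 2) (n + 1) = starPow Φ' (m + 2) (n + 1) :=
  conv_succ_congr hΦ₀ (starPow_succ_apply_zero hΦ₀ m) hΦ fun _ hk =>
    starPow_congr (fun l hl => hΦ l (hl.trans hk)) (m + 1)

theorem starExp_succ (Φ : CF E) (x : Fin (n + 1) → E) :
    starExp Φ (n + 1) x = Φ (n + 1) x +
      ∑ m ∈ range n, ((m + 2).factorial : ℝ)⁻¹ * starPow Φ (m + 2) (n + 1) x := by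
  have hpow_zero : starPow Φ 0 (n + 1) x = 0 := by simp [starPow, unit]
  rw [starExp, sum_range_succ', sum_range_succ', hpow_zero, starPow_one_s18]
  simp only [zero_add, Nat.factorial_one, Nat.cast_one, inv_one, one_mul, mul_zero, add_zero,
    add_comm (Φ _ x)]

theorem starExp_injOn : Set.InjOn starExp {Φ : CF E | Φ 0 = 0} := by
  intro Φ hΦ₀ Φ' hΦ'₀ hexp
  funext n
  induction n using Nat.strong_induction_on with
  | _ n ih =>
    rcases n with _ | n
    · exact hΦ₀.trans hΦ'₀.symm
    funext x
    have hx : starExp Φ (n + 1) x = starExp Φ' (n + 1) x := by rw [hexp]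
    have hpow (m : ℕ) : starPow Φ (m + 2) (n + 1) = starPow Φ' (m + 2) (n + 1) :=
      starPow_add_two_succ_congr hΦ₀ (fun k hk => ih k (Nat.lt_succ_of_le hk)) m
    simpa only [starExp_succ, hpow, add_left_inj] using hx

end Injectivity

section Twist

/-- Pointwise multiplication of a configuration functional by the multiplicative one-particle
weight `∏ⱼ w (xⱼ)`. -/
noncomputable def twist (w : E → ℝ) (Φ : CF E) : CF E :=
  fun n x => (∏ j, w (x j)) * Φ n x

variable (v w : E → ℝ) (Φ Ψ : CF E)

theorem prod_sub (x : Fin n → E) (I : Finset (Fin n)) :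
    ∏ j, w (sub x I j) = ∏ j ∈ I, w (x j) := by
  rw [← prod_coe_sort I]
  exact Equiv.prod_comp (I.orderIsoOfFin rfl).toEquiv fun i : I => w (x i)

theorem twist_apply_zero : twist w Φ 0 = Φ 0 := by
  funext x
  simp [twist]

theorem twist_unit : twist w unit = unit := by
  funext n x
  cases n <;> simp [twist, unit]

theorem twist_smul (c : ℝ) : twist w (c • Φ) = c • twist w Φ := by
  funext n x
  exact mul_left_comm _ _ _

theorem twist_twist : twist v (twist w Φ) = twist (v * w) Φ := by
  funext n x
  simp only [twist, Pi.mul_apply, prod_mul_distrib, mul_assoc]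

theorem twist_conv : twist w (conv Φ Ψ) = conv (twist w Φ) (twist w Ψ) := by
  funext n x
  simp only [twist, conv, mul_sum, prod_sub]
  refine sum_congr rfl fun I _ => ?_
  rw [← prod_mul_prod_compl I, mul_mul_mul_comm]

theorem twist_starPow (m : ℕ) : twist w (starPow Φ m) = starPow (twist w Φ) m := by
  induction m with
  | zero => exact twist_unit w
  | succ m ih => rw [starPow, starPow, twist_conv, ih]

theorem twist_starExp : twist w (starExp Φ) = starExp (twist w Φ) := by
  funext n x
  simp only [starExp, ← twist_starPow, twist, mul_sum, mul_left_comm]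

theorem D_smul (a : E) (c : ℝ) : D a (c • Φ) = c • D a Φ :=
  rfl

theorem D_twist (a : E) : D a (twist w Φ) = w a • twist w (D a Φ) := by
  funext n y
  simp [D, twist, Fin.prod_univ_succ, mul_assoc]

end Twist

section Kirkwood

/-- The Kirkwood closure functional with density `ς` and pair function `g`. Here `g` takes the two
positions rather than their difference, so that `E` needs no group structure. -/
noncomputable def kirkwood (ς : ℝ) (g : E → E → ℝ) : CF E :=
  fun n x => ς ^ n * ∏ p : Fin n × Fin n with p.1 < p.2, g (x p.1) (x p.2)

variable (ς : ℝ) (g : E → E → ℝ)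

theorem prod_lt_cons (a : E) (y : Fin n → E) :
    ∏ p : Fin (n + 1) × Fin (n + 1) with p.1 < p.2,
        g (Fin.cons (α := fun _ => E) a y p.1) (Fin.cons (α := fun _ => E) a y p.2) =
      (∏ j, g a (y j)) * ∏ p : Fin n × Fin n with p.1 < p.2, g (y p.1) (y p.2) := by
  simp [prod_filter, Fintype.prod_prod_type, Fin.prod_univ_succ]

theorem D_kirkwood (a : E) : D a (kirkwood ς g) = ς • twist (g a) (kirkwood ς g) := by
  funext n y
  simp only [D, kirkwood, twist, prod_lt_cons, Pi.smul_apply, smul_eq_mul]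
  ring

theorem D2_kirkwood (a b : E) :
    D2 a b (kirkwood ς g) = (ς ^ 2 * g b a) • twist (g a * g b) (kirkwood ς g) := by
  rw [D2, D_kirkwood, D_smul, D_twist, D_kirkwood, twist_smul, twist_twist, smul_smul, smul_smul,
    mul_comm (g b)]
  congr 1
  ring

theorem kirkwood_two (a b : E) : kirkwood ς g 2 ![a, b] = ς ^ 2 * g a b := by
  simp [kirkwood, prod_filter, Fintype.prod_prod_type, Fin.prod_univ_two]

end Kirkwood

end CF

open CF in
theorem kirkwood_twoPoint_kernel_closed_form_general {E : Type} {ς : ℝ} (hς : ς ≠ 0)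
    {g : E → E → ℝ} {x₁ x₂ : E} (hsymm : g x₂ x₁ = g x₁ x₂) (hg : g x₁ x₂ ≠ 0)
    {ρT F : CF E} (hρT₀ : ρT 0 = 0) (hρT : starExp ρT = kirkwood ς g) (hF₀ : F 0 = 0)
    (hF : D2 x₁ x₂ (kirkwood ς g) = kirkwood ς g 2 ![x₁, x₂] • starExp F) :
    F = twist (g x₁ * g x₂) ρT := by
  have hc : ς ^ 2 * g x₁ x₂ ≠ 0 := mul_ne_zero (pow_ne_zero 2 hς) hg
  have hexp : twist (g x₁ * g x₂) (kirkwood ς g) = starExp F := by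
    rw [D2_kirkwood, kirkwood_two, hsymm] at hF
    exact smul_right_injective _ hc hF
  refine starExp_injOn hF₀ ((twist_apply_zero _ ρT).trans hρT₀) ?_
  rw [← hexp, ← hρT, twist_starExp]

open CF Finset in
/-- eq. (4.7): closed form of the two-point expansion kernels of
the Kirkwood closure process. -/
theorem kirkwood_twoPoint_kernel_closed_form (d : ℕ) (hd : 1 ≤ d)
    (ς : ℝ) (hς : 0 < ς) (g h : Euc d → ℝ)
    (hg_even : ∀ z, g (-z) = g z) (hg_nonneg : ∀ z, 0 ≤ g z)
    (hh : ∀ z, h z = g z - 1)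
    (ρ ρT : CF (Euc d))
    (hρ : ∀ (n : ℕ) (x : Fin n → Euc d),
      ρ n x = ς ^ n *
        ∏ p ∈ (Finset.univ : Finset (Fin n × Fin n)).filter (fun p => p.1 < p.2),
          g (x p.1 - x p.2))
    (hρT0 : ρT 0 = 0) (hρTsymm : IsSymm ρT) (hρTexp : starExp ρT = ρ)
    (x₁ x₂ : Euc d) (hg12 : g (x₁ - x₂) ≠ 0)
    (F : CF (Euc d)) (hF0 : F 0 = 0) (hFsymm : IsSymm F)
    (hF : D2 x₁ x₂ ρ = ρ 2 ![x₁, x₂] • starExp F) :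
    ∀ (k : ℕ), 1 ≤ k → ∀ y : Fin k → Euc d,
      F k y =
        (∏ j : Fin k, (1 + h (x₁ - y j)) * (1 + h (x₂ - y j))) * ρT k y := by
  obtain rfl : ρ = kirkwood ς fun u v => g (u - v) := funext₂ hρ
  have hsymm : g (x₂ - x₁) = g (x₁ - x₂) := by rw [← hg_even, neg_sub]
  intro k _ y
  rw [kirkwood_twoPoint_kernel_closed_form_general hς.ne' hsymm hg12 hρT0 hρTexp hF0 hF]
  simp [twist, hh]
end
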